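/- Near-diagonal lower bound for the heat kernel (Proposition 4.3): For every real μ ≥ 1 and every r > 0 there exists a constant C > 0 such that for every choice of continuous ν, a : ℝ → ℝ with 1/μ ≤ ν(x) ≤ μ and 1/μ ≤ a(x) ≤ μ for all x, every real W ≥ 0, every corrector T and every fundamental solution P of the canonical equation, one has P(t,x,y) ≥ 1/(C√t) for all t > 0 and all x, y ∈ ℝ satisfying |T(x) − T(y) − W t| ≤ r√t. -/

import Mathlib

open MeasureTheory Filter

/-- Two-sided ellipticity bounds `1/μ ≤ f ≤ μ`. -/
def Elliptic (μ : ℝ) (f : ℝ → ℝ) : Prop := ∀ x : ℝ, 1 / μ ≤ f x ∧ f x ≤ μ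

/-- A classical solution of the canonical equation
`ν(x)∂ₜp − ∂ₓ(ν(x)a(x)∂ₓp) + W∂ₓp = 0` for every time `t ∈ s` and every `x ∈ ℝ`. -/
def IsCanonicalSolOn (ν a : ℝ → ℝ) (W : ℝ) (u : ℝ → ℝ → ℝ) (s : Set ℝ) : Prop :=
  ∃ ut ux q : ℝ → ℝ → ℝ, ∀ t ∈ s, ∀ x : ℝ,
    HasDerivAt (fun τ => u τ x) (ut t x) t ∧
    HasDerivAt (fun ξ => u t ξ) (ux t x) x ∧
    HasDerivAt (fun ξ => ν ξ * a ξ * ux t ξ) (q t x) x ∧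
    ν x * ut t x - q t x + W * ux t x = 0

/-- A corrector: `T(0) = 0`, `−(aνT')' + WT' = Wν` and `1/μ⁵ ≤ T' ≤ μ⁵`. -/
def IsCorrector (μ : ℝ) (ν a : ℝ → ℝ) (W : ℝ) (T : ℝ → ℝ) : Prop :=
  T 0 = 0 ∧ ∃ T' : ℝ → ℝ,
    (∀ x, HasDerivAt T (T' x) x) ∧
    (∀ x, HasDerivAt (fun y => a y * ν y * T' y) (W * T' x - W * ν x) x) ∧
    (∀ x, 1 / μ ^ 5 ≤ T' x ∧ T' x ≤ μ ^ 5)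

/-- An adjoint corrector: `T̃(0) = 0`, `(aνT̃')' + WT̃' = Wν` and `1/μ⁵ ≤ T̃' ≤ μ⁵`. -/
def IsAdjointCorrector (μ : ℝ) (ν a : ℝ → ℝ) (W : ℝ) (T : ℝ → ℝ) : Prop :=
  T 0 = 0 ∧ ∃ T' : ℝ → ℝ,
    (∀ x, HasDerivAt T (T' x) x) ∧
    (∀ x, HasDerivAt (fun y => a y * ν y * T' y) (W * ν x - W * T' x) x) ∧
    (∀ x, 1 / μ ^ 5 ≤ T' x ∧ T' x ≤ μ ^ 5)

/-- A fundamental solution of the canonical equation. -/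
def IsFundSol (ν a : ℝ → ℝ) (W : ℝ) (P : ℝ → ℝ → ℝ → ℝ) : Prop :=
  (∀ y : ℝ, IsCanonicalSolOn ν a W (fun t x => P t x y) (Set.Ioi 0)) ∧
  (∀ y : ℝ, ∀ t : ℝ, 0 < t → ∀ x : ℝ, 0 ≤ P t x y) ∧
  (∀ y : ℝ, ∀ t : ℝ, 0 < t → ∫ x : ℝ, ν x * P t x y = 1) ∧
  (∀ y : ℝ, ∀ φ : ℝ → ℝ, Continuous φ → (∃ B : ℝ, ∀ x, |φ x| ≤ B) →
    Tendsto (fun t => ∫ x : ℝ, ν x * P t x y * φ x)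
      (nhdsWithin 0 (Set.Ioi 0)) (nhds (φ y))) ∧
  (∀ s t : ℝ, 0 < s → 0 < t → ∀ x y : ℝ,
    P (t + s) x y = ∫ z : ℝ, ν z * P t x z * P s z y)

/-!
In the coordinate `N x = ∫₀ˣ ν` the mass `∫_p^q ν u(t,·)` of a solution `u` solves, formally, a
parabolic equation in time and in the two end points `(N p, N q)`. A smooth strict subsolution
(a *barrier*) which lies below the masses on the parabolic boundary of a region therefore stays
below them inside. Since only the existence of `∂ₜu` is known, `u` is first replaced by its
inf-convolution in time, whose masses the barrier touches from below; the joint continuity of `u`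
which this requires comes from the minimum principle, Baire's theorem and Scheffé's lemma.

A first barrier shows that at least half of the mass stays within `O(√t)` of the drifting pole
`N y + W t`. A second, Gaussian, barrier starts from this concentrated mass and vanishes for the
degenerate interval `[x, x]`; its derivative there bounds `u(t,x)` from below by a multiple of
`1 / √t`. Finally the corrector equation integrates to `a ν T' - W (T - N) = const`, so that `T` and
`N` differ by at most a bounded multiple of `1 / W`, and the near-diagonal condition can be read in
either coordinate.
-/

open Set Topology

/-! ### One-sided derivative tests -/

theorem hasDerivAt_nonneg_of_frequently_right {k : ℝ → ℝ} {k' z : ℝ} (hk : HasDerivAt k k' z)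
    (hle : ∃ᶠ y in 𝓝[>] z, k z ≤ k y) : 0 ≤ k' := by
  have hslope : Tendsto (slope k z) (𝓝[>] z) (𝓝 k') :=
    (hasDerivAt_iff_tendsto_slope.1 hk).mono_left (nhdsWithin_mono z fun _ hy => ne_of_gt hy)
  refine ge_of_tendsto_of_frequently hslope ((hle.and_eventually self_mem_nhdsWithin).mono ?_)
  rintro y ⟨hky, hzy⟩
  rw [slope_def_field]
  exact div_nonneg (sub_nonneg.2 hky) (sub_nonneg.2 (le_of_lt hzy))

theorem hasDerivAt_nonneg_of_frequently_left {k : ℝ → ℝ} {k' z : ℝ} (hk : HasDerivAt k k' z)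
    (hle : ∃ᶠ y in 𝓝[<] z, k y ≤ k z) : 0 ≤ k' := by
  have hslope : Tendsto (slope k z) (𝓝[<] z) (𝓝 k') :=
    (hasDerivAt_iff_tendsto_slope.1 hk).mono_left (nhdsWithin_mono z fun _ hy => ne_of_lt hy)
  refine ge_of_tendsto_of_frequently hslope ((hle.and_eventually self_mem_nhdsWithin).mono ?_)
  rintro y ⟨hky, hyz⟩
  rw [slope_def_field]
  exact div_nonneg_of_nonpos (sub_nonpos.2 hky) (sub_nonpos.2 (le_of_lt hyz))

theorem frequently_nonpos_left_of_hasDerivAt {H H' : ℝ → ℝ} {q : ℝ}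
    (hH : ∀ y, HasDerivAt H (H' y) y) (hmin : ∀ᶠ y in 𝓝[<] q, H q ≤ H y) :
    ∃ᶠ y in 𝓝[<] q, H' y ≤ 0 := by
  by_contra hpos
  obtain ⟨l, hl, hlq⟩ := mem_nhdsLT_iff_exists_Ioo_subset.1 ((not_frequently.1 hpos).and hmin)
  obtain ⟨m, hlm, hmq⟩ := exists_between (show l < q from hl)
  have hmono : StrictMonoOn H (Icc m q) := by
    refine strictMonoOn_of_deriv_pos (convex_Icc _ _)
      (fun y _ => (hH y).continuousAt.continuousWithinAt) fun y hy => ?_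
    rw [interior_Icc] at hy
    rw [(hH y).deriv]
    exact not_le.1 (hlq ⟨hlm.trans hy.1, hy.2⟩).1
  exact (hmono (left_mem_Icc.2 hmq.le) (right_mem_Icc.2 hmq.le) hmq).not_ge (hlq ⟨hlm, hmq⟩).2

theorem frequently_nonneg_right_of_hasDerivAt {H H' : ℝ → ℝ} {p : ℝ}
    (hH : ∀ y, HasDerivAt H (H' y) y) (hmin : ∀ᶠ y in 𝓝[>] p, H p ≤ H y) :
    ∃ᶠ y in 𝓝[>] p, 0 ≤ H' y := by
  by_contra hneg
  obtain ⟨l, hl, hpl⟩ := mem_nhdsGT_iff_exists_Ioo_subset.1 ((not_frequently.1 hneg).and hmin)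
  obtain ⟨m, hpm, hml⟩ := exists_between (show p < l from hl)
  have hanti : StrictAntiOn H (Icc p m) := by
    refine strictAntiOn_of_deriv_neg (convex_Icc _ _)
      (fun y _ => (hH y).continuousAt.continuousWithinAt) fun y hy => ?_
    rw [interior_Icc] at hy
    rw [(hH y).deriv]
    exact not_le.1 (hpl ⟨hy.1, hy.2.trans hml⟩).1
  exact (hanti (left_mem_Icc.2 hpm.le) (right_mem_Icc.2 hpm.le) hpm).not_ge (hpl ⟨hpm, hml⟩).2

/-! ### Functions touched from above by subsolutions -/

/-- `w` is touched from above at `z` by a function `f` for which `A f'` is differentiable at `z`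
and `(A f')' - W f' ≤ g` there. This is the one-dimensional viscosity-type inequality satisfied by
inf-convolutions of solutions. -/
def TouchedAbove (A w g : ℝ → ℝ) (W z : ℝ) : Prop :=
  ∃ (f f' : ℝ → ℝ) (c : ℝ), (∀ᶠ y in 𝓝 z, w y ≤ f y) ∧ f z = w z ∧
    (∀ y, HasDerivAt f (f' y) y) ∧ HasDerivAt (fun y => A y * f' y) c z ∧ c - W * f' z ≤ g z

theorem TouchedAbove.not_isLocalMin_sub {A w g G ω : ℝ → ℝ} {W z G' : ℝ}
    (h : TouchedAbove A w g W z) (hA : ∀ x, 0 < A x) (hW : 0 ≤ W) (hG : HasDerivAt G G' z)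
    (hgG : g z < G') (hω : ∀ y, HasDerivAt ω ((W * w y + G y) / A y) y) :
    ¬ IsLocalMin (fun y => w y - ω y) z := by
  intro hmin
  obtain ⟨f, f', c, hwf, hfz, hf, hAf, hc⟩ := h
  have hfω : ∀ y, HasDerivAt (fun y => f y - ω y) (f' y - (W * w y + G y) / A y) y :=
    fun y => (hf y).sub (hω y)
  have hminf : IsLocalMin (fun y => f y - ω y) z := by
    filter_upwards [hmin, hwf] with y hy hwy
    linarith
  have hflux : HasDerivAt (fun y => A y * f' y - W * f y - G y) (c - W * f' z - G') z :=
    (hAf.sub ((hf z).const_mul W)).sub hG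
  have hflux_z : A z * f' z - W * f z - G z = 0 := by
    have hf'z : f' z = (W * w z + G z) / A z := by
      linarith [hminf.hasDerivAt_eq_zero (hfω z)]
    rw [hf'z, hfz, mul_div_cancel₀ _ (hA z).ne']
    ring
  -- the flux of `f - ω` is strictly decreasing at `z`, hence positive just to the left of `z`
  have hfreq : ∃ᶠ y in 𝓝[<] z, A y * f' y - W * f y - G y ≤ A z * f' z - W * f z - G z := by
    have hnonpos := frequently_nonpos_left_of_hasDerivAt hfω (hminf.filter_mono nhdsWithin_le_nhds)
    refine (hnonpos.and_eventually (hwf.filter_mono nhdsWithin_le_nhds)).mono ?_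
    rintro y ⟨hy, hwy⟩
    have hy' : A y * f' y ≤ W * w y + G y := by
      rwa [sub_nonpos, le_div_iff₀ (hA y), mul_comm] at hy
    have := mul_le_mul_of_nonneg_left hwy hW
    linarith
  linarith [hasDerivAt_nonneg_of_frequently_left hflux hfreq]

/-- Flux comparison with the source enlarged to `g + η`: the minimum over `[p, q]` of `w - ω`,
where `A ω' - W w` has derivative `g + η` and starts strictly above the flux of `γ` at `p`, can
only be attained at `q`. -/
theorem flux_le_of_touchedAbove_add {A w g γ β : ℝ → ℝ} {W p q γ' β' η : ℝ} (hA : Continuous A)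
    (hA0 : ∀ x, 0 < A x) (hw : Continuous w) (hg : Continuous g) (hW : 0 ≤ W) (hpq : p < q)
    (htouch : ∀ z ∈ Ioo p q, TouchedAbove A w g W z)
    (hγ : HasDerivAt γ γ' p) (hγp : γ p = w p) (hγw : ∃ᶠ y in 𝓝[>] p, w y ≤ γ y)
    (hβ : HasDerivAt β β' q) (hβq : β q = w q) (hβw : ∃ᶠ y in 𝓝[<] q, w y ≤ β y) (hη : 0 < η) :
    A q * β' ≤ W * w q + (A p * γ' - W * w p + η + ∫ z in p..q, (g z + η)) := by
  have hgη : Continuous fun z => g z + η := by fun_prop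
  set G : ℝ → ℝ := fun y => A p * γ' - W * w p + η + ∫ z in p..y, (g z + η) with hG
  have hGd : ∀ y, HasDerivAt G (g y + η) y := fun y =>
    (hgη.integral_hasStrictDerivAt p y).hasDerivAt.const_add _
  have hGc : Continuous G := continuous_iff_continuousAt.2 fun y => (hGd y).continuousAt
  have hFc : Continuous fun y => (W * w y + G y) / A y :=
    Continuous.div (by fun_prop) hA fun x => (hA0 x).ne'
  set ω : ℝ → ℝ := fun y => ∫ z in p..y, (W * w z + G z) / A z with hω
  have hωd : ∀ y, HasDerivAt ω ((W * w y + G y) / A y) y := fun y =>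
    (hFc.integral_hasStrictDerivAt p y).hasDerivAt
  have hωc : Continuous ω := continuous_iff_continuousAt.2 fun y => (hωd y).continuousAt
  obtain ⟨z, hz, hzmin⟩ := isCompact_Icc.exists_isMinOn (nonempty_Icc.2 hpq.le)
    (hw.sub hωc).continuousOn
  have hzle : ∀ y ∈ Icc p q, w z - ω z ≤ w y - ω y := fun y hy => hzmin hy
  have hzp : z ≠ p := by
    rintro rfl
    have hnonneg := hasDerivAt_nonneg_of_frequently_right (hγ.sub (hωd z))
      ((hγw.and_eventually (Ioo_mem_nhdsGT hpq)).mono fun y hy => by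
        have := hzle y (Ioo_subset_Icc_self hy.2)
        simp only [Pi.sub_apply]; linarith [hy.1])
    rw [sub_nonneg, div_le_iff₀ (hA0 z)] at hnonneg
    simp only [hG, intervalIntegral.integral_same] at hnonneg
    linarith
  have hzq : z = q := by
    by_contra hne
    have hzI : z ∈ Ioo p q := ⟨hz.1.lt_of_ne' hzp, hz.2.lt_of_ne hne⟩
    exact (htouch z hzI).not_isLocalMin_sub hA0 hW (hGd z) (by linarith) hωd
      (hzmin.isLocalMin (Icc_mem_nhds hzI.1 hzI.2))
  subst hzq
  have hnonneg := hasDerivAt_nonneg_of_frequently_left ((hωd z).sub hβ)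
    ((hβw.and_eventually (Ioo_mem_nhdsLT hpq)).mono fun y hy => by
      have := hzle y (Ioo_subset_Icc_self hy.2)
      simp only [Pi.sub_apply]; linarith [hy.1])
  rwa [sub_nonneg, le_div_iff₀ (hA0 z), mul_comm] at hnonneg

theorem flux_sub_le_of_touchedAbove {A w g γ β : ℝ → ℝ} {W p q γ' β' : ℝ} (hA : Continuous A)
    (hA0 : ∀ x, 0 < A x) (hw : Continuous w) (hg : Continuous g) (hW : 0 ≤ W) (hpq : p < q)
    (htouch : ∀ z ∈ Ioo p q, TouchedAbove A w g W z)
    (hγ : HasDerivAt γ γ' p) (hγp : γ p = w p) (hγw : ∃ᶠ y in 𝓝[>] p, w y ≤ γ y)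
    (hβ : HasDerivAt β β' q) (hβq : β q = w q) (hβw : ∃ᶠ y in 𝓝[<] q, w y ≤ β y) :
    A q * β' - W * w q - (A p * γ' - W * w p) ≤ ∫ z in p..q, g z := by
  refine le_of_forall_pos_le_add fun ε hε => ?_
  have hpos : 0 < 1 + (q - p) := by linarith
  have h := flux_le_of_touchedAbove_add hA hA0 hw hg hW hpq htouch hγ hγp hγw hβ hβq hβw
    (div_pos hε hpos)
  rw [intervalIntegral.integral_add (hg.intervalIntegrable _ _) (by simp),
    intervalIntegral.integral_const, smul_eq_mul] at h
  have hη : ε / (1 + (q - p)) + (q - p) * (ε / (1 + (q - p))) = ε := by field_simp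
  linarith

/-! ### Inf-convolution in time -/

/-- The inf-convolution of `u` in the time variable with the parabola `n (t - s)²`, the infimum
being restricted to `s ∈ [τ₀, τ₃]`. -/
noncomputable def timeInfConv (n τ₀ τ₃ : ℝ) (u : ℝ → ℝ → ℝ) (t x : ℝ) : ℝ :=
  sInf ((fun s => u s x + n * (t - s) ^ 2) '' Icc τ₀ τ₃)

theorem continuous_timeInfConv {u : ℝ → ℝ → ℝ} (hu : Continuous fun z : ℝ × ℝ => u z.1 z.2)
    (n τ₀ τ₃ : ℝ) : Continuous fun z : ℝ × ℝ => timeInfConv n τ₀ τ₃ u z.1 z.2 := by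
  have : Continuous fun w : (ℝ × ℝ) × ℝ => u w.2 w.1.2 :=
    hu.comp (by fun_prop : Continuous fun w : (ℝ × ℝ) × ℝ => (w.2, w.1.2))
  exact isCompact_Icc.continuous_sInf
    (f := fun (z : ℝ × ℝ) s => u s z.2 + n * (z.1 - s) ^ 2)
    (show Continuous fun w : (ℝ × ℝ) × ℝ => u w.2 w.1.2 + n * (w.1.1 - w.2) ^ 2 by fun_prop)

section TimeInfConv

variable {u : ℝ → ℝ → ℝ} {n τ₀ τ₃ t x s : ℝ}

theorem timeInfConv_le (hu : ContinuousOn (fun s => u s x) (Icc τ₀ τ₃)) (hs : s ∈ Icc τ₀ τ₃) :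
    timeInfConv n τ₀ τ₃ u t x ≤ u s x + n * (t - s) ^ 2 := by
  have hcont : ContinuousOn (fun s => u s x + n * (t - s) ^ 2) (Icc τ₀ τ₃) := by fun_prop
  exact csInf_le (isCompact_Icc.image_of_continuousOn hcont).bddBelow (mem_image_of_mem _ hs)

theorem timeInfConv_le_self (hu : ContinuousOn (fun s => u s x) (Icc τ₀ τ₃))
    (ht : t ∈ Icc τ₀ τ₃) : timeInfConv n τ₀ τ₃ u t x ≤ u t x := by
  simpa using timeInfConv_le (n := n) (t := t) hu ht

theorem exists_timeInfConv_eq (hτ : τ₀ ≤ τ₃) (hu : ContinuousOn (fun s => u s x) (Icc τ₀ τ₃)) :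
    ∃ s ∈ Icc τ₀ τ₃, timeInfConv n τ₀ τ₃ u t x = u s x + n * (t - s) ^ 2 :=
  isCompact_Icc.exists_sInf_image_eq (nonempty_Icc.2 hτ)
    (by fun_prop : ContinuousOn (fun s => u s x + n * (t - s) ^ 2) (Icc τ₀ τ₃))

theorem abs_sub_lt_of_timeInfConv_eq {k d : ℝ} (hd : 0 ≤ d) (hn : 0 < n) (hkn : 2 * k < n * d ^ 2)
    (hu : ContinuousOn (fun s => u s x) (Icc τ₀ τ₃)) (hk : ∀ s ∈ Icc τ₀ τ₃, |u s x| ≤ k)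
    (ht : t ∈ Icc τ₀ τ₃) (hs : s ∈ Icc τ₀ τ₃)
    (hmin : timeInfConv n τ₀ τ₃ u t x = u s x + n * (t - s) ^ 2) : |t - s| < d := by
  have hle : u s x + n * (t - s) ^ 2 ≤ u t x := hmin ▸ timeInfConv_le_self hu ht
  have hlt : n * (t - s) ^ 2 < n * d ^ 2 := by
    linarith [(abs_le.1 (hk t ht)).2, (abs_le.1 (hk s hs)).1]
  exact abs_lt_of_sq_lt_sq (lt_of_mul_lt_mul_left hlt hn.le) hd

theorem deriv_le_of_timeInfConv_eq {d h : ℝ} (hh : 0 < h)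
    (hu : ContinuousOn (fun s => u s x) (Icc τ₀ τ₃)) (hs : s ∈ Ioo τ₀ τ₃)
    (hmin : timeInfConv n τ₀ τ₃ u t x = u s x + n * (t - s) ^ 2)
    (hd : HasDerivAt (fun s => u s x) d s) :
    d ≤ (timeInfConv n τ₀ τ₃ u t x - timeInfConv n τ₀ τ₃ u (t - h) x) / h + n * h := by
  have hloc : IsLocalMin (fun s => u s x + n * (t - s) ^ 2) s := by
    filter_upwards [Ioo_mem_nhds hs.1 hs.2] with s' hs'
    exact hmin ▸ timeInfConv_le hu (Ioo_subset_Icc_self hs')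
  have hpar : HasDerivAt (fun s => n * (t - s) ^ 2) (-(2 * n * (t - s))) s := by
    refine ((((hasDerivAt_id s).const_sub t).pow 2).const_mul n).congr_deriv ?_
    simp only [id_eq]; ring
  have hzero := hloc.hasDerivAt_eq_zero (hd.add hpar)
  have hle : timeInfConv n τ₀ τ₃ u (t - h) x ≤ u s x + n * (t - h - s) ^ 2 :=
    timeInfConv_le hu (Ioo_subset_Icc_self hs)
  rw [← sub_le_iff_le_add, le_div_iff₀ hh, hmin]
  linear_combination hle + h * hzero

/-- The touching function at `z` is `u s`, up to an additive constant, with `s` a time at which the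
infimum defining the inf-convolution is attained. -/
theorem touchedAbove_timeInfConv {ν a : ℝ → ℝ} {W a₀ b₀ z h : ℝ} (hν : ∀ x, 0 ≤ ν x) (hh : 0 < h)
    (sol : IsCanonicalSolOn ν a W u (Ioo τ₀ τ₃))
    (hu : ∀ x ∈ Ioo a₀ b₀, ContinuousOn (fun s => u s x) (Icc τ₀ τ₃))
    (hs : s ∈ Ioo τ₀ τ₃) (hz : z ∈ Ioo a₀ b₀)
    (hmin : timeInfConv n τ₀ τ₃ u t z = u s z + n * (t - s) ^ 2) :
    TouchedAbove (fun y => ν y * a y) (timeInfConv n τ₀ τ₃ u t)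
      (fun y => ν y * ((timeInfConv n τ₀ τ₃ u t y - timeInfConv n τ₀ τ₃ u (t - h) y) / h + n * h))
      W z := by
  obtain ⟨ut, ux, q, hsol⟩ := sol
  refine ⟨fun y => u s y + n * (t - s) ^ 2, ux s, q s z, ?_, hmin.symm,
    fun y => (hsol s hs y).2.1.add_const _, (hsol s hs z).2.2.1, ?_⟩
  · filter_upwards [Ioo_mem_nhds hz.1 hz.2] with y hy
    exact timeInfConv_le (hu y hy) (Ioo_subset_Icc_self hs)
  · have hut := deriv_le_of_timeInfConv_eq hh (hu z hz) hs hmin (hsol s hs z).1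
    linarith [(hsol s hs z).2.2.2, mul_le_mul_of_nonneg_left hut (hν z)]

end TimeInfConv

/-- `V` regularizes the solution `u` in time: on the times `T` and the interval `[a₀, b₀]` it lies
between `u - κ` and `u`, it dominates some value `u s x` with `s ∈ S`, and it satisfies the equation
in the sense of touching, with `∂ₜ` replaced by backward difference quotients. -/
structure IsTimeRegularization (ν a : ℝ → ℝ) (W : ℝ) (u : ℝ → ℝ → ℝ) (S T : Set ℝ)
    (a₀ b₀ κ n : ℝ) (V : ℝ → ℝ → ℝ) : Prop where
  continuous : Continuous fun z : ℝ × ℝ => V z.1 z.2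
  sub_le : ∀ t ∈ T, ∀ x ∈ Icc a₀ b₀, u t x - κ ≤ V t x
  le : ∀ t ∈ T, ∀ x ∈ Icc a₀ b₀, V t x ≤ u t x
  exists_le : ∀ t ∈ T, ∀ x ∈ Icc a₀ b₀, ∃ s ∈ S, u s x ≤ V t x
  touchedAbove : ∀ t ∈ T, ∀ h > 0, ∀ z ∈ Ioo a₀ b₀, TouchedAbove (fun y => ν y * a y) (V t)
    (fun y => ν y * ((V t y - V (t - h) y) / h + n * h)) W z

theorem exists_continuous_eqOn_of_isClosed {R : Set (ℝ × ℝ)} (hR : IsClosed R)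
    {u : ℝ × ℝ → ℝ} (hu : ContinuousOn u R) : ∃ U : ℝ × ℝ → ℝ, Continuous U ∧ EqOn U u R := by
  obtain ⟨U, hU⟩ := ContinuousMap.exists_restrict_eq hR ⟨R.domRestrict u, hu.domRestrict⟩
  exact ⟨U, U.continuous, fun z hz => DFunLike.congr_fun hU ⟨z, hz⟩⟩

theorem TouchedAbove.congr {A w w' g g' : ℝ → ℝ} {W z : ℝ} (h : TouchedAbove A w g W z)
    (hw : w' =ᶠ[𝓝 z] w) (hg : g' z = g z) : TouchedAbove A w' g' W z := by
  obtain ⟨f, f', c, hwf, hfz, hf, hAf, hc⟩ := h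
  refine ⟨f, f', c, ?_, hfz.trans hw.eq_of_nhds.symm, hf, hAf, hg ▸ hc⟩
  filter_upwards [hw, hwf] with y hy hy'
  rwa [hy]

theorem exists_forall_timeInfConv_eq {u : ℝ → ℝ → ℝ} {τ₀ τ₃ a₀ b₀ d : ℝ} (hτ : τ₀ ≤ τ₃)
    (hd : 0 < d) (hu : ContinuousOn (fun z : ℝ × ℝ => u z.1 z.2) (Icc τ₀ τ₃ ×ˢ Icc a₀ b₀)) :
    ∃ n > 0, ∀ t ∈ Icc τ₀ τ₃, ∀ x ∈ Icc a₀ b₀, ∃ s ∈ Icc τ₀ τ₃,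
      timeInfConv n τ₀ τ₃ u t x = u s x + n * (t - s) ^ 2 ∧ |t - s| < d := by
  obtain ⟨k, hk⟩ := (isCompact_Icc.prod isCompact_Icc).exists_bound_of_continuousOn hu
  refine ⟨(2 * |k| + 1) / d ^ 2, by positivity, fun t ht x hx => ?_⟩
  have hux : ContinuousOn (fun s => u s x) (Icc τ₀ τ₃) :=
    hu.comp (f := fun s => (s, x)) (by fun_prop) fun s hs => ⟨hs, hx⟩
  obtain ⟨s, hs, hVs⟩ := exists_timeInfConv_eq hτ hux
  refine ⟨s, hs, hVs, abs_sub_lt_of_timeInfConv_eq hd.le (by positivity) ?_ hux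
    (fun s hs => hk (s, x) ⟨hs, hx⟩) ht hs hVs⟩
  rw [div_mul_cancel₀ _ (by positivity)]
  linarith [le_abs_self k]

theorem exists_isTimeRegularization {ν a : ℝ → ℝ} {W : ℝ} {u : ℝ → ℝ → ℝ}
    {τ₀ τ₁ τ₂ τ₃ a₀ b₀ κ : ℝ} (hν : ∀ x, 0 ≤ ν x) (h01 : τ₀ < τ₁) (h12 : τ₁ ≤ τ₂) (h23 : τ₂ < τ₃)
    (hκ : 0 < κ) (sol : IsCanonicalSolOn ν a W u (Ioo τ₀ τ₃))
    (hu : ContinuousOn (fun z : ℝ × ℝ => u z.1 z.2) (Icc τ₀ τ₃ ×ˢ Icc a₀ b₀)) :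
    ∃ n V, 0 < n ∧ IsTimeRegularization ν a W u (Icc τ₀ τ₃) (Icc τ₁ τ₂) a₀ b₀ κ n V := by
  have hR : IsCompact (Icc τ₀ τ₃ ×ˢ Icc a₀ b₀) := isCompact_Icc.prod isCompact_Icc
  have hsub : ∀ t ∈ Icc τ₁ τ₂, t ∈ Icc τ₀ τ₃ := fun t ht =>
    ⟨by linarith [ht.1], by linarith [ht.2]⟩
  obtain ⟨δ, hδ, hδu⟩ := Metric.uniformContinuousOn_iff.1
    (hR.uniformContinuousOn_of_continuous hu) κ hκ
  obtain ⟨U, hUc, hUu⟩ := exists_continuous_eqOn_of_isClosed hR.isClosed hu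
  have hux : ∀ x ∈ Icc a₀ b₀, ContinuousOn (fun s => u s x) (Icc τ₀ τ₃) := fun x hx =>
    hu.comp (f := fun s => (s, x)) (by fun_prop) fun s hs => ⟨hs, hx⟩
  obtain ⟨d, hd, hdδ, hd₁, hd₂⟩ : ∃ d > 0, d ≤ δ ∧ d ≤ τ₁ - τ₀ ∧ d ≤ τ₃ - τ₂ :=
    ⟨min δ (min (τ₁ - τ₀) (τ₃ - τ₂)), by simp [hδ, h01, h23], by simp⟩
  obtain ⟨n, hn, hmin⟩ := exists_forall_timeInfConv_eq (by linarith) hd hu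
  have hVu : ∀ t, ∀ x ∈ Icc a₀ b₀,
      timeInfConv n τ₀ τ₃ (fun t x => U (t, x)) t x = timeInfConv n τ₀ τ₃ u t x := fun t x hx =>
    congrArg sInf (image_congr fun s hs => congrArg (· + n * (t - s) ^ 2)
      (hUu (show (s, x) ∈ Icc τ₀ τ₃ ×ˢ Icc a₀ b₀ from ⟨hs, hx⟩)))
  refine ⟨n, timeInfConv n τ₀ τ₃ fun t x => U (t, x), hn,
    continuous_timeInfConv hUc n τ₀ τ₃, fun t ht x hx => ?_, fun t ht x hx => ?_,
    fun t ht x hx => ?_, fun t ht h hh z hz => ?_⟩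
  · obtain ⟨s, hs, hVs, hts⟩ := hmin t (hsub t ht) x hx
    have hdist := hδu (t, x) ⟨hsub t ht, hx⟩ (s, x) ⟨hs, hx⟩
      (by simpa [Prod.dist_eq, Real.dist_eq, hδ] using hts.trans_le hdδ)
    rw [hVu t x hx, hVs]
    have : 0 ≤ n * (t - s) ^ 2 := by positivity
    linarith [(abs_lt.1 hdist).2]
  · rw [hVu t x hx]
    exact timeInfConv_le_self (hux x hx) (hsub t ht)
  · obtain ⟨s, hs, hVs, -⟩ := hmin t (hsub t ht) x hx
    rw [hVu t x hx, hVs]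
    exact ⟨s, hs, le_add_of_nonneg_right (by positivity)⟩
  · have hzI := Ioo_subset_Icc_self hz
    obtain ⟨s, -, hVs, hts⟩ := hmin t (hsub t ht) z hzI
    have hs : s ∈ Ioo τ₀ τ₃ := by
      constructor <;> linarith [ht.1, ht.2, (abs_lt.1 hts).1, (abs_lt.1 hts).2]
    refine (touchedAbove_timeInfConv hν hh sol (fun x hx => hux x (Ioo_subset_Icc_self hx))
      hs hz hVs).congr ?_ (by simp only [hVu _ z hzI])
    filter_upwards [Ioo_mem_nhds hz.1 hz.2] with y hy
    exact hVu t y (Ioo_subset_Icc_self hy)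

/-! ### Masses of solutions over intervals -/

/-- The coefficients of the canonical equation are continuous and positive. -/
structure PosCoeff (ν a : ℝ → ℝ) : Prop where
  continuous_weight : Continuous ν
  continuous_diffusivity : Continuous a
  weight_pos : ∀ x, 0 < ν x
  diffusivity_pos : ∀ x, 0 < a x

/-- The signed `ν`-mass of the interval from `0` to `x`; it serves as a new space coordinate. -/
noncomputable def cumWeight (ν : ℝ → ℝ) (x : ℝ) : ℝ := ∫ z in (0 : ℝ)..x, ν z

section CumWeight

variable {ν : ℝ → ℝ} (hν : Continuous ν)
include hν

theorem hasDerivAt_cumWeight (x : ℝ) : HasDerivAt (cumWeight ν) (ν x) x :=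
  (hν.integral_hasStrictDerivAt 0 x).hasDerivAt

theorem continuous_cumWeight : Continuous (cumWeight ν) :=
  continuous_iff_continuousAt.2 fun y => (hasDerivAt_cumWeight hν y).continuousAt

theorem cumWeight_sub (p q : ℝ) : cumWeight ν q - cumWeight ν p = ∫ z in p..q, ν z :=
  intervalIntegral.integral_interval_sub_left (hν.intervalIntegrable _ _)
    (hν.intervalIntegrable _ _)

theorem strictMono_cumWeight (hν0 : ∀ x, 0 < ν x) : StrictMono (cumWeight ν) :=
  strictMono_of_deriv_pos fun x => by
    rw [(hasDerivAt_cumWeight hν x).deriv]; exact hν0 x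

end CumWeight

/-- The mass `∫_p^q ν u(t, ·)` carried by `u` at time `t` between `p` and `q`. -/
noncomputable def mass (ν : ℝ → ℝ) (u : ℝ → ℝ → ℝ) (t p q : ℝ) : ℝ := ∫ z in p..q, ν z * u t z

section Mass

variable {ν : ℝ → ℝ} {u V : ℝ → ℝ → ℝ} {t : ℝ}

theorem mass_self (p : ℝ) : mass ν u t p p = 0 := intervalIntegral.integral_same

theorem hasDerivAt_mass_right (h : Continuous fun z => ν z * u t z) (p q : ℝ) :
    HasDerivAt (fun y => mass ν u t p y) (ν q * u t q) q :=
  (h.integral_hasStrictDerivAt p q).hasDerivAt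

theorem hasDerivAt_mass_left (h : Continuous fun z => ν z * u t z) (p q : ℝ) :
    HasDerivAt (fun y => mass ν u t y q) (-(ν p * u t p)) p := by
  have hsymm : (fun y => mass ν u t y q) = fun y => -mass ν u t q y :=
    funext fun y => intervalIntegral.integral_symm _ _
  rw [hsymm]
  exact (hasDerivAt_mass_right h q p).neg

theorem continuous_mass (hν : Continuous ν) (hV : Continuous fun z : ℝ × ℝ => V z.1 z.2) :
    Continuous fun z : ℝ × ℝ × ℝ => mass ν V z.1 z.2.1 z.2.2 := by
  have hνV : ∀ t, Continuous fun z => ν z * V t z := fun t =>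
    hν.mul (hV.comp (by fun_prop : Continuous fun x : ℝ => (t, x)))
  have hprim : Continuous fun z : ℝ × ℝ => ∫ x in (0 : ℝ)..z.2, ν x * V z.1 x := by
    refine intervalIntegral.continuous_parametric_intervalIntegral_of_continuous
      (f := fun (z : ℝ × ℝ) x => ν x * V z.1 x) (s := fun z => z.2) ?_ (by fun_prop)
    exact (hν.comp continuous_snd).mul
      (hV.comp (by fun_prop : Continuous fun w : (ℝ × ℝ) × ℝ => (w.1.1, w.2)))
  have hmass : ∀ t p q, mass ν V t p q =
      (∫ x in (0 : ℝ)..q, ν x * V t x) - ∫ x in (0 : ℝ)..p, ν x * V t x := fun t p q =>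
    (intervalIntegral.integral_interval_sub_left ((hνV t).intervalIntegrable _ _)
      ((hνV t).intervalIntegrable _ _)).symm
  simp only [hmass]
  exact (hprim.comp (by fun_prop : Continuous fun z : ℝ × ℝ × ℝ => (z.1, z.2.2))).sub
    (hprim.comp (by fun_prop : Continuous fun z : ℝ × ℝ × ℝ => (z.1, z.2.1)))

theorem mass_le_mass {p q : ℝ} (hν : Continuous ν) (hν0 : ∀ x, 0 ≤ ν x) (hpq : p ≤ q)
    (hu : ContinuousOn (u t) (Icc p q)) (hV : ContinuousOn (V t) (Icc p q))
    (huV : ∀ x ∈ Icc p q, u t x ≤ V t x) : mass ν u t p q ≤ mass ν V t p q :=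
  intervalIntegral.integral_mono_on hpq
    ((hν.continuousOn.mul hu).intervalIntegrable_of_Icc hpq)
    ((hν.continuousOn.mul hV).intervalIntegrable_of_Icc hpq)
    fun x hx => mul_le_mul_of_nonneg_left (huV x hx) (hν0 x)

theorem mass_sub_const {p q κ : ℝ} (hν : Continuous ν) (hpq : p ≤ q)
    (hu : ContinuousOn (u t) (Icc p q)) :
    mass ν (fun t x => u t x - κ) t p q
      = mass ν u t p q - κ * (cumWeight ν q - cumWeight ν p) := by
  have hsub : ∀ x, ν x * (u t x - κ) = ν x * u t x - κ * ν x := fun x => by ring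
  have hνu : IntervalIntegrable (fun z => ν z * u t z) volume p q :=
    (hν.continuousOn.mul hu).intervalIntegrable_of_Icc hpq
  simp only [mass, hsub]
  rw [intervalIntegral.integral_sub hνu ((hν.const_mul κ).intervalIntegrable _ _),
    intervalIntegral.integral_const_mul, cumWeight_sub hν]

end Mass

/-! ### The comparison principle for masses -/

/-- A function `B(t, z₁, z₂)` with the continuity and derivatives required of a comparison function
for masses; `z₁ ≤ z₂` are the `cumWeight` coordinates of the endpoints of an interval. -/
structure SmoothBarrier where
  toFun : ℝ → ℝ → ℝ → ℝ
  dt : ℝ → ℝ → ℝ → ℝ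
  d1 : ℝ → ℝ → ℝ → ℝ
  d2 : ℝ → ℝ → ℝ → ℝ
  d11 : ℝ → ℝ → ℝ → ℝ
  d22 : ℝ → ℝ → ℝ → ℝ
  continuous : Continuous fun z : ℝ × ℝ × ℝ => toFun z.1 z.2.1 z.2.2
  hasDerivAt_dt : ∀ t z₁ z₂, HasDerivAt (fun t => toFun t z₁ z₂) (dt t z₁ z₂) t
  hasDerivAt_d1 : ∀ t z₁ z₂, HasDerivAt (fun z => toFun t z z₂) (d1 t z₁ z₂) z₁
  hasDerivAt_d2 : ∀ t z₁ z₂, HasDerivAt (fun z => toFun t z₁ z) (d2 t z₁ z₂) z₂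
  hasDerivAt_d11 : ∀ t z₁ z₂, HasDerivAt (fun z => d1 t z z₂) (d11 t z₁ z₂) z₁
  hasDerivAt_d22 : ∀ t z₁ z₂, HasDerivAt (fun z => d2 t z₁ z) (d22 t z₁ z₂) z₂

namespace SmoothBarrier

instance : CoeFun SmoothBarrier fun _ => ℝ → ℝ → ℝ → ℝ := ⟨toFun⟩

/-- The elliptic operator governing masses: formally, `∂ₜ (mass ν u)` equals this expression with
`mass ν u` in place of `B`. -/
noncomputable def spatialOp (B : SmoothBarrier) (ν a : ℝ → ℝ) (W t p q : ℝ) : ℝ :=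
  ν q ^ 2 * a q * B.d22 t (cumWeight ν p) (cumWeight ν q)
    + ν p ^ 2 * a p * B.d11 t (cumWeight ν p) (cumWeight ν q)
    - W * (B.d1 t (cumWeight ν p) (cumWeight ν q) + B.d2 t (cumWeight ν p) (cumWeight ν q))

/-- The excess of the masses of `V` over the barrier. -/
noncomputable def gap (B : SmoothBarrier) (ν : ℝ → ℝ) (V : ℝ → ℝ → ℝ) (t p q : ℝ) : ℝ :=
  mass ν V t p q - B t (cumWeight ν p) (cumWeight ν q)

variable {B : SmoothBarrier} {ν a : ℝ → ℝ} {W : ℝ} {V : ℝ → ℝ → ℝ} {t p q : ℝ}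

theorem continuous_gap (hν : Continuous ν) (hV : Continuous fun z : ℝ × ℝ => V z.1 z.2) :
    Continuous fun z : ℝ × ℝ × ℝ => B.gap ν V z.1 z.2.1 z.2.2 := by
  have hN := continuous_cumWeight hν
  exact (continuous_mass hν hV).sub (B.continuous.comp (by fun_prop :
    Continuous fun z : ℝ × ℝ × ℝ => (z.1, cumWeight ν z.2.1, cumWeight ν z.2.2)))

theorem hasDerivAt_gap_right (hν : Continuous ν) (hV : Continuous (V t)) (p y : ℝ) :
    HasDerivAt (fun y => B.gap ν V t p y)
      (ν y * (V t y - B.d2 t (cumWeight ν p) (cumWeight ν y))) y := by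
  have hB := (B.hasDerivAt_d2 t (cumWeight ν p) (cumWeight ν y)).comp y (hasDerivAt_cumWeight hν y)
  exact ((hasDerivAt_mass_right (hν.mul hV) p y).sub hB).congr_deriv (by ring)

theorem hasDerivAt_gap_left (hν : Continuous ν) (hV : Continuous (V t)) (y q : ℝ) :
    HasDerivAt (fun y => B.gap ν V t y q)
      (-(ν y * (V t y + B.d1 t (cumWeight ν y) (cumWeight ν q)))) y := by
  have hB := HasDerivAt.comp y (B.hasDerivAt_d1 t (cumWeight ν y) (cumWeight ν q))
    (hasDerivAt_cumWeight hν y)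
  exact ((hasDerivAt_mass_left (hν.mul hV) y q).sub hB).congr_deriv (by ring)

theorem le_d2_of_gap_le (hc : PosCoeff ν a) (hV : Continuous (V t))
    (hmin : ∀ᶠ y in 𝓝[<] q, B.gap ν V t p q ≤ B.gap ν V t p y) :
    V t q ≤ B.d2 t (cumWeight ν p) (cumWeight ν q) := by
  have h := hasDerivAt_nonneg_of_frequently_left
    (hasDerivAt_gap_right (B := B) hc.continuous_weight hV p q).neg
    (hmin.frequently.mono fun y hy => neg_le_neg hy)
  linarith [nonpos_of_mul_nonpos_right (neg_nonneg.1 h) (hc.weight_pos q)]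

theorem add_d1_nonpos_of_gap_le (hc : PosCoeff ν a) (hV : Continuous (V t))
    (hmin : ∀ᶠ y in 𝓝[>] p, B.gap ν V t p q ≤ B.gap ν V t y q) :
    V t p + B.d1 t (cumWeight ν p) (cumWeight ν q) ≤ 0 := by
  have h := hasDerivAt_nonneg_of_frequently_right
    (hasDerivAt_gap_left (B := B) hc.continuous_weight hV p q) hmin.frequently
  exact nonpos_of_mul_nonpos_right (neg_nonneg.1 h) (hc.weight_pos p)

theorem d2_eq_of_isLocalMin_gap (hc : PosCoeff ν a) (hV : Continuous (V t))
    (hq : IsLocalMin (fun y => B.gap ν V t p y) q) :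
    B.d2 t (cumWeight ν p) (cumWeight ν q) = V t q := by
  have h := hq.hasDerivAt_eq_zero (hasDerivAt_gap_right hc.continuous_weight hV p q)
  linarith [(mul_eq_zero.1 h).resolve_left (hc.weight_pos q).ne']

theorem neg_d1_eq_of_isLocalMin_gap (hc : PosCoeff ν a) (hV : Continuous (V t))
    (hp : IsLocalMin (fun y => B.gap ν V t y q) p) :
    -B.d1 t (cumWeight ν p) (cumWeight ν q) = V t p := by
  have h := hp.hasDerivAt_eq_zero (hasDerivAt_gap_left hc.continuous_weight hV p q)
  linarith [(mul_eq_zero.1 (neg_eq_zero.1 h)).resolve_left (hc.weight_pos p).ne']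

theorem integral_difference_quotient (hν : Continuous ν) (hV : ∀ t, Continuous (V t))
    (n h : ℝ) : ∫ z in p..q, ν z * ((V t z - V (t - h) z) / h + n * h) =
      (mass ν V t p q - mass ν V (t - h) p q) / h
        + n * h * (cumWeight ν q - cumWeight ν p) := by
  have hsplit : ∀ z, ν z * ((V t z - V (t - h) z) / h + n * h) =
      h⁻¹ * (ν z * V t z - ν z * V (t - h) z) + n * h * ν z := fun z => by ring
  have hνV : ∀ t, IntervalIntegrable (fun z => ν z * V t z) volume p q := fun t =>
    (hν.mul (hV t)).intervalIntegrable _ _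
  simp only [hsplit]
  rw [intervalIntegral.integral_add (((hνV t).sub (hνV (t - h))).const_mul h⁻¹)
      ((hν.const_mul (n * h)).intervalIntegrable _ _), intervalIntegral.integral_const_mul,
    intervalIntegral.integral_const_mul, intervalIntegral.integral_sub (hνV t) (hνV (t - h)),
    cumWeight_sub hν]
  simp only [mass]
  ring

theorem spatialOp_le_difference_quotient {n h : ℝ} (hc : PosCoeff ν a) (hW : 0 ≤ W) (hh : 0 < h)
    (hpq : p < q) (hV : ∀ t, Continuous (V t))
    (hp : IsLocalMin (fun y => B.gap ν V t y q) p) (hq : IsLocalMin (fun y => B.gap ν V t p y) q)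
    (ht : B.gap ν V t p q ≤ B.gap ν V (t - h) p q)
    (htouch : ∀ z ∈ Ioo p q, TouchedAbove (fun y => ν y * a y) (V t)
      (fun y => ν y * ((V t y - V (t - h) y) / h + n * h)) W z) :
    B.spatialOp ν a W t p q ≤
      (B t (cumWeight ν p) (cumWeight ν q) - B (t - h) (cumWeight ν p) (cumWeight ν q)) / h
        + n * h * (cumWeight ν q - cumWeight ν p) := by
  have hν := hc.continuous_weight
  have ha := hc.continuous_diffusivity
  have hVt := hV t
  have hVth := hV (t - h)
  have hVq := d2_eq_of_isLocalMin_gap hc hVt hq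
  have hVp := neg_d1_eq_of_isLocalMin_gap hc hVt hp
  have hfq := (frequently_nonpos_left_of_hasDerivAt (hasDerivAt_gap_right hν hVt p)
    (hq.filter_mono nhdsWithin_le_nhds)).mono fun y hy =>
      sub_nonpos.1 (nonpos_of_mul_nonpos_right hy (hc.weight_pos y))
  have hfp := (frequently_nonneg_right_of_hasDerivAt (fun y => hasDerivAt_gap_left hν hVt y q)
    (hp.filter_mono nhdsWithin_le_nhds)).mono fun y hy => le_neg_iff_add_nonpos_right.2
      (nonpos_of_mul_nonpos_right (neg_nonneg.1 hy) (hc.weight_pos y))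
  have hdp := (HasDerivAt.comp p (B.hasDerivAt_d11 t (cumWeight ν p) (cumWeight ν q))
    (hasDerivAt_cumWeight hν p)).neg
  have hdq := (B.hasDerivAt_d22 t (cumWeight ν p) (cumWeight ν q)).comp q
    (hasDerivAt_cumWeight hν q)
  have hflux := flux_sub_le_of_touchedAbove (hν.mul ha)
    (fun y => mul_pos (hc.weight_pos y) (hc.diffusivity_pos y)) hVt (by fun_prop) hW hpq htouch
    hdp hVp hfp hdq hVq hfq
  rw [integral_difference_quotient hν hV] at hflux
  have hquot : (mass ν V t p q - mass ν V (t - h) p q) / h ≤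
      (B t (cumWeight ν p) (cumWeight ν q) - B (t - h) (cumWeight ν p) (cumWeight ν q)) / h :=
    div_le_div_of_nonneg_right (by simp only [gap] at ht; linarith) hh.le
  rw [← hVp, ← hVq] at hflux
  simp only [Pi.mul_apply] at hflux
  simp only [spatialOp]
  linarith

theorem spatialOp_le_dt {n : ℝ} (hc : PosCoeff ν a) (hW : 0 ≤ W) (hpq : p < q)
    (hV : ∀ t, Continuous (V t))
    (hp : IsLocalMin (fun y => B.gap ν V t y q) p) (hq : IsLocalMin (fun y => B.gap ν V t p y) q)
    (ht : ∀ᶠ h in 𝓝[>] 0, B.gap ν V t p q ≤ B.gap ν V (t - h) p q)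
    (htouch : ∀ h > 0, ∀ z ∈ Ioo p q, TouchedAbove (fun y => ν y * a y) (V t)
      (fun y => ν y * ((V t y - V (t - h) y) / h + n * h)) W z) :
    B.spatialOp ν a W t p q ≤ B.dt t (cumWeight ν p) (cumWeight ν q) := by
  have hquot : Tendsto (fun h => (B t (cumWeight ν p) (cumWeight ν q)
      - B (t - h) (cumWeight ν p) (cumWeight ν q)) / h) (𝓝[>] 0)
      (𝓝 (B.dt t (cumWeight ν p) (cumWeight ν q))) := by
    have hB := B.hasDerivAt_dt (t - 0) (cumWeight ν p) (cumWeight ν q)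
    have hd := (HasDerivAt.comp (0 : ℝ) hB ((hasDerivAt_id (0 : ℝ)).const_sub t)).neg
    simp only [mul_neg, mul_one, neg_neg, sub_zero] at hd
    refine hd.tendsto_slope_zero_right.congr fun h => ?_
    simp only [Pi.neg_apply, Function.comp_apply, zero_add, sub_zero, smul_eq_mul]
    ring
  have herr : Tendsto (fun h => n * h * (cumWeight ν q - cumWeight ν p)) (𝓝[>] 0) (𝓝 0) := by
    have : Tendsto (fun h => n * h * (cumWeight ν q - cumWeight ν p)) (𝓝 0)
        (𝓝 (n * 0 * (cumWeight ν q - cumWeight ν p))) := Continuous.tendsto (by fun_prop) 0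
    simpa only [mul_zero, zero_mul] using this.mono_left nhdsWithin_le_nhds
  refine ge_of_tendsto (by simpa using hquot.add herr) ?_
  filter_upwards [ht, self_mem_nhdsWithin] with h hth hh
  exact spatialOp_le_difference_quotient hc hW hh hpq hV hp hq hth (htouch h hh)

end SmoothBarrier

section Comparison

variable {ν a : ℝ → ℝ} {W : ℝ} {u V : ℝ → ℝ → ℝ} {τ₀ τ₁ τ₂ τ₃ a₀ b₀ : ℝ} {B : SmoothBarrier}

/-- `B` is a strict subsolution of the equation for masses on the intervals contained in `[a₀, b₀]`
and the times `[τ₁, τ₂]`, and it lies below the masses of `u` on the parabolic boundary. At a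
lateral boundary point, a strict bound of a derivative of `B` by the values of `u` is allowed
instead. -/
structure IsSubbarrier (B : SmoothBarrier) (ν a : ℝ → ℝ) (W : ℝ) (u : ℝ → ℝ → ℝ)
    (τ₀ τ₁ τ₂ τ₃ a₀ b₀ : ℝ) : Prop where
  start : ∀ p q, a₀ ≤ p → p ≤ q → q ≤ b₀ → B τ₁ (cumWeight ν p) (cumWeight ν q) ≤ mass ν u τ₁ p q
  diag : ∀ t ∈ Icc τ₁ τ₂, ∀ p ∈ Icc a₀ b₀, B t (cumWeight ν p) (cumWeight ν p) ≤ 0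
  left : ∀ t ∈ Icc τ₁ τ₂, ∀ q ∈ Icc a₀ b₀,
    B t (cumWeight ν a₀) (cumWeight ν q) ≤ mass ν u t a₀ q ∨
      ∀ s ∈ Icc τ₀ τ₃, -B.d1 t (cumWeight ν a₀) (cumWeight ν q) < u s a₀
  right : ∀ t ∈ Icc τ₁ τ₂, ∀ p ∈ Icc a₀ b₀,
    B t (cumWeight ν p) (cumWeight ν b₀) ≤ mass ν u t p b₀ ∨
      ∀ s ∈ Icc τ₀ τ₃, B.d2 t (cumWeight ν p) (cumWeight ν b₀) < u s b₀
  strict : ∀ t ∈ Icc τ₁ τ₂, ∀ p q, a₀ < p → p < q → q < b₀ →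
    mass ν u t p q < B t (cumWeight ν p) (cumWeight ν q) →
      B.dt t (cumWeight ν p) (cumWeight ν q) < B.spatialOp ν a W t p q

theorem IsTimeRegularization.continuous_apply {S T : Set ℝ} {κ n : ℝ}
    (hV : IsTimeRegularization ν a W u S T a₀ b₀ κ n V) (t : ℝ) : Continuous (V t) :=
  hV.continuous.comp (by fun_prop : Continuous fun x : ℝ => (t, x))

theorem IsTimeRegularization.mass_le {S T : Set ℝ} {κ n t p q : ℝ}
    (hV : IsTimeRegularization ν a W u S T a₀ b₀ κ n V) (hc : PosCoeff ν a) (ht : t ∈ T)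
    (hp : a₀ ≤ p) (hpq : p ≤ q) (hq : q ≤ b₀) (hu : ContinuousOn (u t) (Icc a₀ b₀)) :
    mass ν V t p q ≤ mass ν u t p q :=
  mass_le_mass hc.continuous_weight (fun x => (hc.weight_pos x).le) hpq
    (hV.continuous_apply t).continuousOn (hu.mono (Icc_subset_Icc hp hq))
    fun x hx => hV.le t ht x (Icc_subset_Icc hp hq hx)

theorem IsTimeRegularization.mass_sub_le {S T : Set ℝ} {κ n t p q : ℝ}
    (hV : IsTimeRegularization ν a W u S T a₀ b₀ κ n V) (hc : PosCoeff ν a) (hκ : 0 ≤ κ)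
    (ht : t ∈ T) (hp : a₀ ≤ p) (hpq : p ≤ q) (hq : q ≤ b₀) (hu : ContinuousOn (u t) (Icc a₀ b₀)) :
    mass ν u t p q - κ * (cumWeight ν b₀ - cumWeight ν a₀) ≤ mass ν V t p q := by
  have hsub := Icc_subset_Icc hp hq
  have hN := (strictMono_cumWeight hc.continuous_weight hc.weight_pos).monotone
  have hle : mass ν (fun t x => u t x - κ) t p q ≤ mass ν V t p q :=
    mass_le_mass hc.continuous_weight (fun x => (hc.weight_pos x).le) hpq
      ((hu.mono hsub).sub continuousOn_const) (hV.continuous_apply t).continuousOn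
      fun x hx => hV.sub_le t ht x (hsub hx)
  rw [mass_sub_const hc.continuous_weight hpq (hu.mono hsub)] at hle
  have := mul_le_mul_of_nonneg_left
    (show cumWeight ν q - cumWeight ν p ≤ cumWeight ν b₀ - cumWeight ν a₀ by
      linarith [hN hp, hN hq]) hκ
  linarith

theorem IsSubbarrier.mem_interior {κ n t p q : ℝ}
    (hB : IsSubbarrier B ν a W u τ₀ τ₁ τ₂ τ₃ a₀ b₀) (hc : PosCoeff ν a)
    (hV : IsTimeRegularization ν a W u (Icc τ₀ τ₃) (Icc τ₁ τ₂) a₀ b₀ κ n V)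
    (ht : t ∈ Icc τ₁ τ₂) (hp : a₀ ≤ p) (hpq : p ≤ q) (hq : q ≤ b₀)
    (hmin : ∀ p' q', a₀ ≤ p' → p' ≤ q' → q' ≤ b₀ → B.gap ν V t p q ≤ B.gap ν V t p' q')
    (hlt : mass ν u t p q < B t (cumWeight ν p) (cumWeight ν q)) :
    τ₁ < t ∧ a₀ < p ∧ p < q ∧ q < b₀ := by
  have hVt := hV.continuous_apply t
  have hpq' : p < q := by
    refine hpq.lt_of_ne ?_
    rintro rfl
    linarith [hB.diag t ht p ⟨hp, hq⟩, mass_self (ν := ν) (u := u) (t := t) p]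
  refine ⟨ht.1.lt_of_ne ?_, hp.lt_of_ne ?_, hpq', hq.lt_of_ne ?_⟩
  · rintro rfl
    exact (hB.start p q hp hpq hq).not_gt hlt
  · rintro rfl
    obtain ⟨s, hs, hsV⟩ := hV.exists_le t ht a₀ ⟨le_rfl, hpq.trans hq⟩
    have hd1 := (hB.left t ht q ⟨hpq, hq⟩).resolve_left hlt.not_ge s hs
    have := B.add_d1_nonpos_of_gap_le hc hVt (p := a₀) (q := q) <| by
      filter_upwards [Ioo_mem_nhdsGT hpq'] with y hy
      exact hmin y q hy.1.le hy.2.le hq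
    linarith
  · rintro rfl
    obtain ⟨s, hs, hsV⟩ := hV.exists_le t ht q ⟨hp.trans hpq, le_rfl⟩
    have hd2 := (hB.right t ht p ⟨hp, hpq⟩).resolve_left hlt.not_ge s hs
    have := B.le_d2_of_gap_le hc hVt (p := p) (q := q) <| by
      filter_upwards [Ioo_mem_nhdsLT hpq'] with y hy
      exact hmin p y hp hy.1.le hy.2.le
    linarith

theorem exists_isMin_gap {t₀ t₁ : ℝ} (hν : Continuous ν)
    (hV : Continuous fun z : ℝ × ℝ => V z.1 z.2) (ht : t₀ ≤ t₁) (hab : a₀ ≤ b₀) :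
    ∃ t ∈ Icc t₀ t₁, ∃ p q, a₀ ≤ p ∧ p ≤ q ∧ q ≤ b₀ ∧ ∀ t' ∈ Icc t₀ t₁, ∀ p' q',
      a₀ ≤ p' → p' ≤ q' → q' ≤ b₀ → B.gap ν V t p q ≤ B.gap ν V t' p' q' := by
  have hK : IsCompact ((Icc t₀ t₁ ×ˢ Icc a₀ b₀ ×ˢ Icc a₀ b₀) ∩ {z | z.2.1 ≤ z.2.2}) :=
    (isCompact_Icc.prod (isCompact_Icc.prod isCompact_Icc)).inter_right
      (isClosed_le (by fun_prop) (by fun_prop))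
  obtain ⟨⟨t, p, q⟩, ⟨⟨ht', hp, hq⟩, hpq⟩, hmin⟩ := hK.exists_isMinOn
    ⟨(t₀, a₀, a₀), ⟨⟨left_mem_Icc.2 ht, left_mem_Icc.2 hab, left_mem_Icc.2 hab⟩, le_refl a₀⟩⟩
    (B.continuous_gap hν hV).continuousOn
  exact ⟨t, ht', p, q, hp.1, hpq, hq.2, fun t' ht' p' q' hp' hpq' hq' =>
    isMinOn_iff.1 hmin (t', p', q')
      ⟨⟨ht', ⟨hp', hpq'.trans hq'⟩, ⟨hp'.trans hpq', hq'⟩⟩, hpq'⟩⟩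

/-- At an interior minimum of the gap, the regularized equation contradicts strictness; this needs
no regularity of `u` in time beyond the existence of `∂ₜu`. -/
theorem IsSubbarrier.le_mass (hB : IsSubbarrier B ν a W u τ₀ τ₁ τ₂ τ₃ a₀ b₀) (hc : PosCoeff ν a)
    (hW : 0 ≤ W) (sol : IsCanonicalSolOn ν a W u (Ioo τ₀ τ₃)) (h01 : τ₀ < τ₁) (h23 : τ₂ < τ₃)
    (hab : a₀ < b₀) (hu : ContinuousOn (fun z : ℝ × ℝ => u z.1 z.2) (Icc τ₀ τ₃ ×ˢ Icc a₀ b₀))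
    {ts ps qs : ℝ} (hts : ts ∈ Icc τ₁ τ₂) (hps : a₀ ≤ ps) (hpqs : ps ≤ qs) (hqs : qs ≤ b₀) :
    B ts (cumWeight ν ps) (cumWeight ν qs) ≤ mass ν u ts ps qs := by
  by_contra! hcon
  have hM : 0 < cumWeight ν b₀ - cumWeight ν a₀ :=
    sub_pos.2 (strictMono_cumWeight hc.continuous_weight hc.weight_pos hab)
  obtain ⟨κ, hκ, hκM⟩ : ∃ κ > 0, κ * (cumWeight ν b₀ - cumWeight ν a₀) <
      B ts (cumWeight ν ps) (cumWeight ν qs) - mass ν u ts ps qs := by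
    obtain ⟨ε, hε, hεlt⟩ := exists_between (sub_pos.2 hcon)
    exact ⟨ε / (cumWeight ν b₀ - cumWeight ν a₀), div_pos hε hM,
      by rwa [div_mul_cancel₀ _ hM.ne']⟩
  obtain ⟨n, V, -, hV⟩ := exists_isTimeRegularization (fun x => (hc.weight_pos x).le) h01
    (hts.1.trans hts.2) h23 hκ sol hu
  have hut : ∀ t ∈ Icc τ₁ τ₂, ContinuousOn (u t) (Icc a₀ b₀) := fun t ht =>
    hu.comp (f := fun x => (t, x)) (by fun_prop)
      fun x hx => ⟨⟨by linarith [ht.1], by linarith [ht.2]⟩, hx⟩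
  obtain ⟨t, ht, p, q, hp, hpq, hq, hmin⟩ :=
    exists_isMin_gap (B := B) hc.continuous_weight hV.continuous hts.1 hab.le
  have ht' : t ∈ Icc τ₁ τ₂ := ⟨ht.1, ht.2.trans hts.2⟩
  have hlt : mass ν u t p q < B t (cumWeight ν p) (cumWeight ν q) := by
    have hgap := hmin ts (right_mem_Icc.2 hts.1) ps qs hps hpqs hqs
    have hle := hV.mass_le hc hts hps hpqs hqs (hut ts hts)
    have hge := hV.mass_sub_le hc hκ.le ht' hp hpq hq (hut t ht')
    simp only [SmoothBarrier.gap] at hgap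
    linarith
  obtain ⟨htτ, hpa, hpq', hqb⟩ := hB.mem_interior hc hV ht' hp hpq hq (hmin t ht) hlt
  refine (hB.strict t ht' p q hpa hpq' hqb hlt).not_ge
    (B.spatialOp_le_dt hc hW hpq' hV.continuous_apply ?_ ?_ ?_ fun h hh z hz =>
      hV.touchedAbove t ht' h hh z (Ioo_subset_Ioo hp hq hz))
  · filter_upwards [Icc_mem_nhds hpa hpq'] with y hy
    exact hmin t ht y q hy.1 hy.2 hq
  · filter_upwards [Icc_mem_nhds hpq' hqb] with y hy
    exact hmin t ht p y hp hy.1 hy.2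
  · filter_upwards [Ioo_mem_nhdsGT (sub_pos.2 htτ)] with h hh
    exact hmin (t - h) ⟨by linarith [hh.2], by linarith [hh.1, ht.2]⟩ p q hp hpq hq

end Comparison

/-! ### Operations on solutions -/

namespace IsCanonicalSolOn

variable {ν a : ℝ → ℝ} {W : ℝ} {u : ℝ → ℝ → ℝ} {s s' : Set ℝ}

theorem mono (h : IsCanonicalSolOn ν a W u s) (hs : s' ⊆ s) : IsCanonicalSolOn ν a W u s' := by
  obtain ⟨ut, ux, fl, hu⟩ := h
  exact ⟨ut, ux, fl, fun t ht => hu t (hs ht)⟩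

theorem continuous_apply (h : IsCanonicalSolOn ν a W u s) {t : ℝ} (ht : t ∈ s) :
    Continuous (u t) := by
  obtain ⟨ut, ux, fl, hu⟩ := h
  exact continuous_iff_continuousAt.2 fun x => (hu t ht x).2.1.continuousAt

theorem continuousAt_time (h : IsCanonicalSolOn ν a W u s) {t : ℝ} (ht : t ∈ s) (x : ℝ) :
    ContinuousAt (fun s => u s x) t := by
  obtain ⟨ut, ux, fl, hu⟩ := h
  exact (hu t ht x).1.continuousAt

theorem neg (h : IsCanonicalSolOn ν a W u s) : IsCanonicalSolOn ν a W (fun t x => -u t x) s := by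
  obtain ⟨ut, ux, fl, hu⟩ := h
  refine ⟨fun t x => -ut t x, fun t x => -ux t x, fun t x => -fl t x, fun t ht x => ?_⟩
  obtain ⟨hut, hux, hfl, heq⟩ := hu t ht x
  refine ⟨hut.neg, hux.neg, ?_, by linarith⟩
  simpa only [mul_neg] using hfl.fun_neg

theorem shift_sub {k : ℝ} (h : IsCanonicalSolOn ν a W u s) (hs : ∀ t ∈ s', t ∈ s ∧ t + k ∈ s) :
    IsCanonicalSolOn ν a W (fun t x => u (t + k) x - u t x) s' := by
  obtain ⟨ut, ux, fl, hu⟩ := h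
  refine ⟨fun t x => ut (t + k) x - ut t x, fun t x => ux (t + k) x - ux t x,
    fun t x => fl (t + k) x - fl t x, fun t ht x => ?_⟩
  obtain ⟨hut, hux, hfl, heq⟩ := hu t (hs t ht).1 x
  obtain ⟨hut', hux', hfl', heq'⟩ := hu (t + k) (hs t ht).2 x
  refine ⟨(HasDerivAt.comp_add_const t k hut').sub hut, hux'.sub hux, ?_, by linarith⟩
  simpa only [mul_sub] using hfl'.fun_sub hfl

end IsCanonicalSolOn

/-! ### Pointwise bounds from masses -/

theorem hasDerivAt_of_eq_quadratic {f : ℝ → ℝ} {f' z : ℝ} (α β γ : ℝ)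
    (hf : ∀ z, f z = α + β * z + γ * z ^ 2) (hf' : f' = β + 2 * γ * z) : HasDerivAt f f' z := by
  have h := (((hasDerivAt_id z).const_mul β).const_add α).add
    (((hasDerivAt_id z).pow 2).const_mul γ)
  rw [show f = fun z => α + β * z + γ * z ^ 2 from funext hf]
  exact h.congr_deriv (by rw [hf']; simp only [id_eq, Nat.cast_ofNat]; ring)

section Pointwise

variable {ν : ℝ → ℝ} {u : ℝ → ℝ → ℝ} {t : ℝ}

theorem le_of_le_mass {G : ℝ → ℝ} {x b c : ℝ} (hν : Continuous ν) (hνx : 0 < ν x)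
    (hu : Continuous (u t)) (hxb : x < b) (hG : HasDerivAt G c (cumWeight ν x))
    (hG0 : G (cumWeight ν x) = 0) (hle : ∀ q ∈ Ioo x b, G (cumWeight ν q) ≤ mass ν u t x q) :
    c ≤ u t x := by
  have hd := (hasDerivAt_mass_right (hν.mul hu) x x).sub (hG.comp x (hasDerivAt_cumWeight hν x))
  have hnonneg := hasDerivAt_nonneg_of_frequently_right hd <| Eventually.frequently <| by
    filter_upwards [Ioo_mem_nhdsGT hxb] with y hy
    simp only [Pi.sub_apply, Function.comp_apply, hG0, mass_self]
    linarith [hle y hy]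
  refine sub_nonneg.1 (nonneg_of_mul_nonneg_right ?_ hνx)
  linarith

theorem const_mul_le_mass {p q c : ℝ} (hν : Continuous ν) (hν0 : ∀ x, 0 ≤ ν x) (hpq : p ≤ q)
    (hu : ContinuousOn (u t) (Icc p q)) (hc : ∀ x ∈ Icc p q, c ≤ u t x) :
    c * (cumWeight ν q - cumWeight ν p) ≤ mass ν u t p q := by
  have h := mass_le_mass (u := fun _ _ => c) hν hν0 hpq continuousOn_const hu hc
  rwa [mass, intervalIntegral.integral_mul_const, ← cumWeight_sub hν, mul_comm] at h

theorem mass_neg (p q : ℝ) : mass ν (fun t x => -u t x) t p q = -mass ν u t p q := by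
  simp only [mass, mul_neg, intervalIntegral.integral_neg]

theorem mass_shift_sub {k : ℝ} (hν : Continuous ν) (hut : Continuous (u t))
    (huk : Continuous (u (t + k))) (p q : ℝ) :
    mass ν (fun s y => u (s + k) y - u s y) t p q = mass ν u (t + k) p q - mass ν u t p q := by
  simp only [mass, mul_sub]
  exact intervalIntegral.integral_sub ((hν.mul huk).intervalIntegrable _ _)
    ((hν.mul hut).intervalIntegrable _ _)

end Pointwise

section InteriorEstimate

/-- The barrier of the interior estimate. It vanishes at the diagonal point `(z₀, z₀)` at time `t₀`
with `∂₂ = -η C₁`, is at most `-η` away from that point, and its concavity defect `κ C₁` makes it a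
subsolution. -/
def interiorBarrier (C₁ C₂ C₃ κ η z₀ t₀ : ℝ) : SmoothBarrier where
  toFun t z₁ z₂ := -(η * (C₁ * ((z₂ - z₁) - κ * (z₂ - z₁) ^ 2)
    + C₂ * ((z₁ - z₀) ^ 2 + (z₂ - z₀) ^ 2) + C₃ * (t₀ - t)))
  dt _ _ _ := η * C₃
  d1 _ z₁ z₂ := -(η * (C₁ * (-1 + 2 * κ * (z₂ - z₁)) + 2 * C₂ * (z₁ - z₀)))
  d2 _ z₁ z₂ := -(η * (C₁ * (1 - 2 * κ * (z₂ - z₁)) + 2 * C₂ * (z₂ - z₀)))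
  d11 _ _ _ := 2 * η * (κ * C₁ - C₂)
  d22 _ _ _ := 2 * η * (κ * C₁ - C₂)
  continuous := by fun_prop
  hasDerivAt_dt t z₁ z₂ := hasDerivAt_of_eq_quadratic (-(η * (C₁ * ((z₂ - z₁) - κ * (z₂ - z₁) ^ 2)
    + C₂ * ((z₁ - z₀) ^ 2 + (z₂ - z₀) ^ 2) + C₃ * t₀))) (η * C₃) 0 (fun t => by ring) (by ring)
  hasDerivAt_d1 t z₁ z₂ := hasDerivAt_of_eq_quadratic (-(η * (C₁ * (z₂ - κ * z₂ ^ 2)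
      + C₂ * (z₀ ^ 2 + (z₂ - z₀) ^ 2) + C₃ * (t₀ - t))))
    (-(η * (C₁ * (-1 + 2 * κ * z₂) - 2 * C₂ * z₀))) (-(η * (-(C₁ * κ) + C₂)))
    (fun z => by ring) (by ring)
  hasDerivAt_d2 t z₁ z₂ := hasDerivAt_of_eq_quadratic (-(η * (C₁ * (-z₁ - κ * z₁ ^ 2)
      + C₂ * (z₀ ^ 2 + (z₁ - z₀) ^ 2) + C₃ * (t₀ - t))))
    (-(η * (C₁ * (1 + 2 * κ * z₁) - 2 * C₂ * z₀))) (-(η * (-(C₁ * κ) + C₂)))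
    (fun z => by ring) (by ring)
  hasDerivAt_d11 _ _ z₂ := hasDerivAt_of_eq_quadratic
    (-(η * (C₁ * (-1 + 2 * κ * z₂) - 2 * C₂ * z₀))) (2 * η * (κ * C₁ - C₂)) 0
    (fun z => by ring) (by ring)
  hasDerivAt_d22 _ z₁ _ := hasDerivAt_of_eq_quadratic
    (-(η * (C₁ * (1 + 2 * κ * z₁) - 2 * C₂ * z₀))) (2 * η * (κ * C₁ - C₂)) 0
    (fun z => by ring) (by ring)

variable {ν a : ℝ → ℝ} {W : ℝ} {d : ℝ → ℝ → ℝ} {a₀ b₀ ℓ lam τ₀ τ₁ τ₃ : ℝ}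
  {C₁ C₂ C₃ κ η z₀ t₀ t z₁ z₂ : ℝ}

theorem interiorBarrier_le_neg (hC₁ : 0 ≤ C₁) (hη : 0 ≤ η) (hz : z₁ ≤ z₂) (hκ : κ * (z₂ - z₁) ≤ 1)
    (hfar : 1 ≤ C₂ * ((z₁ - z₀) ^ 2 + (z₂ - z₀) ^ 2) + C₃ * (t₀ - t)) :
    interiorBarrier C₁ C₂ C₃ κ η z₀ t₀ t z₁ z₂ ≤ -η := by
  have hlen : 0 ≤ C₁ * ((z₂ - z₁) - κ * (z₂ - z₁) ^ 2) := mul_nonneg hC₁ (by nlinarith)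
  have := mul_le_mul_of_nonneg_left (add_le_add hlen hfar) hη
  simp only [interiorBarrier]
  linarith

theorem isSubbarrier_interiorBarrier (hc : PosCoeff ν a) (hW : 0 ≤ W) (hC₁ : 0 ≤ C₁)
    (hC₂ : 0 ≤ C₂) (hC₃ : 0 ≤ C₃) (hη : 0 < η) (hκ0 : 0 ≤ κ)
    (hκ : κ * (cumWeight ν b₀ - cumWeight ν a₀) ≤ 1) (hℓ0 : 0 ≤ ℓ) (hℓ : 1 ≤ C₂ * ℓ ^ 2)
    (hz₀a : cumWeight ν a₀ + ℓ ≤ z₀) (hz₀b : z₀ + ℓ ≤ cumWeight ν b₀)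
    (hθ : 1 ≤ C₃ * (t₀ - τ₁)) (hlam : ∀ x ∈ Icc a₀ b₀, lam ≤ ν x ^ 2 * a x) (hC : C₂ ≤ κ * C₁)
    (hsub : C₃ + 4 * W * C₂ * (cumWeight ν b₀ - cumWeight ν a₀) < 4 * lam * (κ * C₁ - C₂))
    (hτ : τ₁ ≤ t₀)
    (hmass : ∀ t ∈ Icc τ₁ t₀, ∀ p q, a₀ ≤ p → p ≤ q → q ≤ b₀ → -η ≤ mass ν d t p q) :
    IsSubbarrier (interiorBarrier C₁ C₂ C₃ κ η z₀ t₀) ν a W d τ₀ τ₁ t₀ τ₃ a₀ b₀ := by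
  have hN := (strictMono_cumWeight hc.continuous_weight hc.weight_pos).monotone
  have hle : ∀ t ∈ Icc τ₁ t₀, ∀ p q, a₀ ≤ p → p ≤ q → q ≤ b₀ →
      1 ≤ C₂ * ((cumWeight ν p - z₀) ^ 2 + (cumWeight ν q - z₀) ^ 2) + C₃ * (t₀ - t) →
      interiorBarrier C₁ C₂ C₃ κ η z₀ t₀ t (cumWeight ν p) (cumWeight ν q) ≤ mass ν d t p q :=
    fun t ht p q hp hpq hq hfar => (interiorBarrier_le_neg hC₁ hη.le (hN hpq)
      ((mul_le_mul_of_nonneg_left (by linarith [hN hp, hN hq]) hκ0).trans hκ) hfar).trans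
        (hmass t ht p q hp hpq hq)
  have htime : ∀ t ∈ Icc τ₁ t₀, 0 ≤ C₃ * (t₀ - t) := fun t ht =>
    mul_nonneg hC₃ (sub_nonneg.2 ht.2)
  have hspace : ∀ y z : ℝ, ℓ ≤ |z - z₀| → 1 ≤ C₂ * ((y - z₀) ^ 2 + (z - z₀) ^ 2) := fun y z hz =>
    hℓ.trans (mul_le_mul_of_nonneg_left
      (by nlinarith [sq_nonneg (y - z₀), pow_le_pow_left₀ hℓ0 hz 2, sq_abs (z - z₀)]) hC₂)
  constructor
  · intro p q hp hpq hq
    have : 0 ≤ C₂ * ((cumWeight ν p - z₀) ^ 2 + (cumWeight ν q - z₀) ^ 2) := by positivity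
    exact hle τ₁ ⟨le_rfl, hτ⟩ p q hp hpq hq (by linarith)
  · intro t ht p _
    have : 0 ≤ η * (C₂ * ((cumWeight ν p - z₀) ^ 2 + (cumWeight ν p - z₀) ^ 2) + C₃ * (t₀ - t)) :=
      mul_nonneg hη.le (add_nonneg (by positivity) (htime t ht))
    simp only [interiorBarrier]
    linarith
  · intro t ht q hq
    have := hspace (cumWeight ν q) (cumWeight ν a₀)
      (by rw [abs_sub_comm]; exact le_abs.2 (by grind))
    exact .inl (hle t ht a₀ q le_rfl hq.1 hq.2 (by linarith [htime t ht]))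
  · intro t ht p hp
    have := hspace (cumWeight ν p) (cumWeight ν b₀) (le_abs.2 (by grind))
    exact .inl (hle t ht p b₀ hp.1 hp.2 le_rfl (by linarith [htime t ht]))
  · intro t _ p q hp hpq hq _
    have hlamp := mul_le_mul_of_nonneg_right (hlam p ⟨hp.le, by linarith⟩) (sub_nonneg.2 hC)
    have hlamq := mul_le_mul_of_nonneg_right (hlam q ⟨by linarith, hq.le⟩) (sub_nonneg.2 hC)
    have hdrift := mul_le_mul_of_nonneg_left
      (show -(2 * (cumWeight ν b₀ - cumWeight ν a₀)) ≤ cumWeight ν p - z₀ + (cumWeight ν q - z₀) by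
        linarith [hN hp.le, hN hpq.le]) (by positivity : 0 ≤ 2 * W * C₂)
    have := mul_lt_mul_of_pos_left (show C₃ <
      ν q ^ 2 * a q * (2 * (κ * C₁ - C₂)) + ν p ^ 2 * a p * (2 * (κ * C₁ - C₂))
        + 2 * W * C₂ * (cumWeight ν p - z₀ + (cumWeight ν q - z₀)) by linarith) hη
    simp only [SmoothBarrier.spatialOp, interiorBarrier]
    linarith

theorem IsSubbarrier.interior_lower_bound {x : ℝ}
    (hB : IsSubbarrier (interiorBarrier C₁ C₂ C₃ κ η (cumWeight ν x) t₀) ν a W d τ₀ τ₁ t₀ τ₃ a₀ b₀)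
    (hc : PosCoeff ν a) (hW : 0 ≤ W) (sol : IsCanonicalSolOn ν a W d (Ioo τ₀ τ₃)) (h01 : τ₀ < τ₁)
    (h1t : τ₁ ≤ t₀) (ht3 : t₀ < τ₃)
    (hd : ContinuousOn (fun z : ℝ × ℝ => d z.1 z.2) (Icc τ₀ τ₃ ×ˢ Icc a₀ b₀)) (hax : a₀ ≤ x)
    (hxb : x < b₀) : -(C₁ * η) ≤ d t₀ x := by
  refine le_of_le_mass hc.continuous_weight (hc.weight_pos x)
    (sol.continuous_apply ⟨h01.trans_le h1t, ht3⟩) hxb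
    (((interiorBarrier C₁ C₂ C₃ κ η (cumWeight ν x) t₀).hasDerivAt_d2 t₀ _ _).congr_deriv ?_) ?_
    fun q hq => hB.le_mass hc hW sol h01 ht3 (hax.trans_lt hxb) hd ⟨h1t, le_rfl⟩ hax
      hq.1.le hq.2.le
  · simp only [interiorBarrier]; ring
  · simp only [interiorBarrier]; ring

theorem exists_interior_lower_bound {θ : ℝ} (hc : PosCoeff ν a) (hW : 0 ≤ W) (hab : a₀ < b₀)
    (hℓ : 0 < ℓ) (hθ : 0 < θ) :
    ∃ C > 0, ∀ (d : ℝ → ℝ → ℝ) (τ₀ τ₁ t₀ τ₃ η : ℝ), IsCanonicalSolOn ν a W d (Ioo τ₀ τ₃) →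
      τ₀ < τ₁ → τ₁ + θ ≤ t₀ → t₀ < τ₃ →
      ContinuousOn (fun z : ℝ × ℝ => d z.1 z.2) (Icc τ₀ τ₃ ×ˢ Icc a₀ b₀) → 0 < η →
      (∀ t ∈ Icc τ₁ t₀, ∀ p q, a₀ ≤ p → p ≤ q → q ≤ b₀ → -η ≤ mass ν d t p q) →
      ∀ x, cumWeight ν a₀ + ℓ ≤ cumWeight ν x → cumWeight ν x + ℓ ≤ cumWeight ν b₀ →
        -(C * η) ≤ d t₀ x := by
  have hN := strictMono_cumWeight hc.continuous_weight hc.weight_pos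
  obtain ⟨m, -, hm⟩ := isCompact_Icc.exists_isMinOn (nonempty_Icc.2 hab.le)
    ((hc.continuous_weight.pow 2).mul hc.continuous_diffusivity).continuousOn
  set L := cumWeight ν b₀ - cumWeight ν a₀
  set lam := ν m ^ 2 * a m
  have hL : 0 < L := sub_pos.2 (hN hab)
  have hlam : 0 < lam := mul_pos (pow_pos (hc.weight_pos m) 2) (hc.diffusivity_pos m)
  set E := (1 / θ + 4 * W * (1 / ℓ ^ 2) * L + 1) / (4 * lam)
  set C := 2 * L * (1 / ℓ ^ 2 + E)
  have hκC : 1 / (2 * L) * C = 1 / ℓ ^ 2 + E := by simp only [C]; field_simp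
  have hE : 4 * lam * E = 1 / θ + 4 * W * (1 / ℓ ^ 2) * L + 1 := by simp only [E]; field_simp
  have hE0 : 0 < E := by positivity
  have hC : 0 < C := by positivity
  refine ⟨C, hC, fun d τ₀ τ₁ t₀ τ₃ η sol h01 h1t ht3 hd hη hmass x hxa hxb => ?_⟩
  have hB : IsSubbarrier (interiorBarrier C (1 / ℓ ^ 2) (1 / θ) (1 / (2 * L)) η (cumWeight ν x) t₀)
      ν a W d τ₀ τ₁ t₀ τ₃ a₀ b₀ :=
    isSubbarrier_interiorBarrier (ℓ := ℓ) (lam := lam) hc hW hC.le (by positivity) (by positivity)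
      hη (by positivity) (by change 1 / (2 * L) * L ≤ 1; field_simp; norm_num) hℓ.le
      (by field_simp; exact le_rfl) hxa hxb
      (by rw [div_mul_eq_mul_div, le_div_iff₀ hθ]; linarith)
      (fun y hy => hm hy) (by linarith) (by rw [hκC, add_sub_cancel_left, hE]; linarith)
      (by linarith) hmass
  exact hB.interior_lower_bound hc hW sol h01 (by linarith) ht3 hd
    (hN.le_iff_le.1 (by linarith)) (hN.lt_iff_lt.1 (by linarith))

end InteriorEstimate

/-! ### Minimum principle and left continuity -/

/-- The masses of `u` over all intervals are equicontinuous functions of positive time. -/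
def EquicontinuousMass (ν : ℝ → ℝ) (u : ℝ → ℝ → ℝ) : Prop :=
  EquicontinuousOn (fun (I : ℝ × ℝ) t => mass ν u t I.1 I.2) (Ioi 0)

namespace EquicontinuousMass

variable {ν : ℝ → ℝ} {u : ℝ → ℝ → ℝ}

theorem neg (h : EquicontinuousMass ν u) : EquicontinuousMass ν fun t x => -u t x := by
  intro t ht
  rw [Metric.uniformity_basis_dist.equicontinuousWithinAt_iff_right]
  simpa only [mass_neg, mem_ofPred_eq, dist_neg_neg] using
    Metric.uniformity_basis_dist.equicontinuousWithinAt_iff_right.1 (h t ht)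

theorem exists_abs_sub_lt {α β η : ℝ} (h : EquicontinuousMass ν u) (hα : 0 < α) (hη : 0 < η) :
    ∃ δ > 0, ∀ s ∈ Icc α β, ∀ t ∈ Icc α β, |s - t| < δ →
      ∀ p q, |mass ν u s p q - mass ν u t p q| < η := by
  have hK := equicontinuous_restrict_iff _ |>.2
    (h.mono fun t (ht : t ∈ Icc α β) => hα.trans_le ht.1)
  obtain ⟨δ, hδ, hδ'⟩ := Metric.uniformEquicontinuous_iff.1
    (CompactSpace.uniformEquicontinuous_of_equicontinuous hK) η hη
  exact ⟨δ, hδ, fun s hs t ht hst p q => hδ' ⟨s, hs⟩ ⟨t, ht⟩ hst (p, q)⟩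

end EquicontinuousMass

section MinimumPrinciple

/-- The barrier of the minimum principle: the masses of the constant `c`, less an error `η` that
grows from time `s` on. -/
def constantBarrier (c η s : ℝ) : SmoothBarrier where
  toFun t z₁ z₂ := c * (z₂ - z₁) - η * (1 + (t - s))
  dt _ _ _ := -η
  d1 _ _ _ := -c
  d2 _ _ _ := c
  d11 _ _ _ := 0
  d22 _ _ _ := 0
  continuous := by fun_prop
  hasDerivAt_dt t z₁ z₂ := hasDerivAt_of_eq_quadratic (c * (z₂ - z₁) - η * (1 - s)) (-η) 0
    (fun t => by ring) (by ring)
  hasDerivAt_d1 t z₁ z₂ := hasDerivAt_of_eq_quadratic (c * z₂ - η * (1 + (t - s))) (-c) 0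
    (fun t => by ring) (by ring)
  hasDerivAt_d2 t z₁ z₂ := hasDerivAt_of_eq_quadratic (-(c * z₁) - η * (1 + (t - s))) c 0
    (fun t => by ring) (by ring)
  hasDerivAt_d11 _ _ _ := hasDerivAt_const _ _
  hasDerivAt_d22 _ _ _ := hasDerivAt_const _ _

variable {ν a : ℝ → ℝ} {W : ℝ} {u : ℝ → ℝ → ℝ} {α t₁ x₁ x₂ c η s t τ₀ τ₃ : ℝ}

theorem isSubbarrier_constantBarrier (hη : 0 < η)
    (hstart : ∀ p q, x₁ ≤ p → p ≤ q → q ≤ x₂ →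
      c * (cumWeight ν q - cumWeight ν p) - η ≤ mass ν u s p q)
    (hleft : ∀ τ ∈ Icc τ₀ τ₃, c < u τ x₁) (hright : ∀ τ ∈ Icc τ₀ τ₃, c < u τ x₂) :
    IsSubbarrier (constantBarrier c η s) ν a W u τ₀ s t τ₃ x₁ x₂ := by
  constructor
  · intro p q hp hpq hq
    simpa only [constantBarrier, sub_self, add_zero, mul_one] using hstart p q hp hpq hq
  · intro τ hτ p _
    have := mul_nonneg hη.le (by linarith [hτ.1] : 0 ≤ 1 + (τ - s))
    simp only [constantBarrier, sub_self, mul_zero]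
    linarith
  · exact fun τ _ q _ => .inr fun σ hσ => by simpa only [constantBarrier, neg_neg] using hleft σ hσ
  · exact fun τ _ p _ => .inr hright
  · intro τ _ p q _ _ _ _
    simp only [constantBarrier, SmoothBarrier.spatialOp, mul_zero, neg_add_cancel, add_zero,
      sub_zero]
    linarith

theorem const_mul_le_mass_of_parabolic_boundary (hc : PosCoeff ν a) (hW : 0 ≤ W)
    (sol : IsCanonicalSolOn ν a W u (Ioi 0)) (hM : EquicontinuousMass ν u) (hα : 0 < α)
    (hx : x₁ < x₂) (hu : ContinuousOn (fun z : ℝ × ℝ => u z.1 z.2) (Ioo α t₁ ×ˢ Icc x₁ x₂))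
    (hleft : ∀ s ∈ Ioo α t₁, c < u s x₁) (hright : ∀ s ∈ Ioo α t₁, c < u s x₂)
    (hstart : ∀ x ∈ Icc x₁ x₂, c ≤ u α x) (ht : t ∈ Ioo α t₁) {p q : ℝ} (hp : x₁ ≤ p)
    (hpq : p ≤ q) (hq : q ≤ x₂) :
    c * (cumWeight ν q - cumWeight ν p) ≤ mass ν u t p q := by
  refine le_of_forall_pos_le_add fun ε hε => ?_
  obtain ⟨η, hη, hηε⟩ : ∃ η > 0, η * (1 + (t - α)) = ε :=
    have : 0 < 1 + (t - α) := by linarith [ht.1]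
    ⟨ε / (1 + (t - α)), by positivity, by field_simp⟩
  obtain ⟨δ, hδ, hδ'⟩ := hM.exists_abs_sub_lt (β := t) hα hη
  obtain ⟨s, hαs, hs⟩ := exists_between (lt_min (lt_add_of_pos_right α hδ) ht.1)
  obtain ⟨hsδ, hst⟩ := lt_min_iff.1 hs
  have hsub : Icc ((α + s) / 2) ((t + t₁) / 2) ⊆ Ioo α t₁ := fun τ hτ =>
    ⟨by linarith [hτ.1], by linarith [hτ.2, ht.2]⟩
  have hB : IsSubbarrier (constantBarrier c η s) ν a W u
      ((α + s) / 2) s t ((t + t₁) / 2) x₁ x₂ := by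
    refine isSubbarrier_constantBarrier hη (fun p q hp hpq hq => ?_)
      (fun τ hτ => hleft τ (hsub hτ)) fun τ hτ => hright τ (hsub hτ)
    have hle := const_mul_le_mass hc.continuous_weight (fun x => (hc.weight_pos x).le) hpq
      (sol.continuous_apply hα).continuousOn fun x hx => hstart x (Icc_subset_Icc hp hq hx)
    have := hδ' s ⟨hαs.le, hst.le⟩ α ⟨le_rfl, ht.1.le⟩ (abs_lt.2 ⟨by linarith, by linarith⟩) p q
    linarith [(abs_lt.1 this).1]
  have hle := hB.le_mass hc hW (sol.mono fun τ hτ => hα.trans (hsub (Ioo_subset_Icc_self hτ)).1)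
    (by linarith) (by linarith [ht.2]) hx (hu.mono (prod_mono hsub subset_rfl)) ⟨hst.le, le_rfl⟩
    hp hpq hq
  have := mul_le_mul_of_nonneg_left (by linarith : 1 + (t - s) ≤ 1 + (t - α)) hη.le
  simp only [constantBarrier] at hle
  linarith

theorem le_of_parabolic_boundary (hc : PosCoeff ν a) (hW : 0 ≤ W)
    (sol : IsCanonicalSolOn ν a W u (Ioi 0)) (hM : EquicontinuousMass ν u) (hα : 0 < α)
    (hαt : α < t₁) (hu : ContinuousOn (fun z : ℝ × ℝ => u z.1 z.2) (Ioo α t₁ ×ˢ Icc x₁ x₂))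
    (hleft : ∀ s ∈ Ioo α t₁, c < u s x₁) (hright : ∀ s ∈ Ioo α t₁, c < u s x₂)
    (hstart : ∀ x ∈ Icc x₁ x₂, c ≤ u α x) {x : ℝ} (hx : x ∈ Ioo x₁ x₂) : c ≤ u t₁ x := by
  have hlt : ∀ t ∈ Ioo α t₁, c ≤ u t x := fun t ht =>
    le_of_le_mass hc.continuous_weight (hc.weight_pos x)
      (sol.continuous_apply (hα.trans ht.1)) hx.2 (G := fun z => c * (z - cumWeight ν x))
      (hasDerivAt_of_eq_quadratic (-(c * cumWeight ν x)) c 0 (fun z => by ring) (by ring))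
      (by simp only [sub_self, mul_zero]) fun q hq =>
        const_mul_le_mass_of_parabolic_boundary hc hW sol hM hα (hx.1.trans hx.2) hu hleft hright
          hstart ht hx.1.le hq.1.le hq.2.le
  refine ge_of_tendsto ((sol.continuousAt_time (hα.trans hαt) x).tendsto.mono_left
    (nhdsWithin_le_nhds (s := Iio t₁))) ?_
  filter_upwards [Ioo_mem_nhdsLT hαt] with s hs using hlt s hs

theorem abs_sub_le_of_parabolic_boundary {ε : ℝ} (hc : PosCoeff ν a) (hW : 0 ≤ W)
    (sol : IsCanonicalSolOn ν a W u (Ioi 0)) (hM : EquicontinuousMass ν u) (hα : 0 < α)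
    (hαt : α < t₁) (hu : ContinuousOn (fun z : ℝ × ℝ => u z.1 z.2) (Ioo α t₁ ×ˢ Icc x₁ x₂))
    (hleft : ∀ s ∈ Ioo α t₁, |u s x₁ - c| < ε) (hright : ∀ s ∈ Ioo α t₁, |u s x₂ - c| < ε)
    (hstart : ∀ x ∈ Icc x₁ x₂, |u α x - c| ≤ ε) {x : ℝ} (hx : x ∈ Ioo x₁ x₂) :
    |u t₁ x - c| ≤ ε := by
  have hlow : c - ε ≤ u t₁ x := le_of_parabolic_boundary hc hW sol hM hα hαt hu
    (fun s hs => by linarith [(abs_lt.1 (hleft s hs)).1])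
    (fun s hs => by linarith [(abs_lt.1 (hright s hs)).1])
    (fun z hz => by linarith [(abs_le.1 (hstart z hz)).1]) hx
  have hup : -(c + ε) ≤ -u t₁ x := le_of_parabolic_boundary hc hW sol.neg hM.neg hα hαt hu.neg
    (fun s hs => by linarith [(abs_lt.1 (hleft s hs)).2])
    (fun s hs => by linarith [(abs_lt.1 (hright s hs)).2])
    (fun z hz => by linarith [(abs_le.1 (hstart z hz)).2]) hx
  exact abs_le.2 ⟨by linarith, by linarith⟩

end MinimumPrinciple

section LeftContinuity

variable {ν a : ℝ → ℝ} {W : ℝ} {u : ℝ → ℝ → ℝ} {α t₁ x₁ x₂ x₀ ε : ℝ}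

/-- The interior estimate is applied to `u(· + k, ·) - u`, whose masses are small for small `k`. -/
theorem eventually_neg_le_sub_of_lt (hc : PosCoeff ν a) (hW : 0 ≤ W)
    (sol : IsCanonicalSolOn ν a W u (Ioi 0)) (hM : EquicontinuousMass ν u) (hα : 0 < α)
    (hαt : α < t₁) (hx₀ : x₀ ∈ Ioo x₁ x₂)
    (hu : ContinuousOn (fun z : ℝ × ℝ => u z.1 z.2) (Ioo α t₁ ×ˢ Icc x₁ x₂)) (hε : 0 < ε) :
    ∀ᶠ z in 𝓝 (t₁, x₀), z.1 < t₁ → -ε ≤ u t₁ z.2 - u z.1 z.2 := by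
  have hν := hc.continuous_weight
  have hN := strictMono_cumWeight hν hc.weight_pos
  obtain ⟨ℓ, hℓ, hℓx⟩ := exists_between
    (lt_min (sub_pos.2 (hN hx₀.1)) (sub_pos.2 (hN hx₀.2)))
  obtain ⟨hℓ₁, hℓ₂⟩ := lt_min_iff.1 hℓx
  obtain ⟨g, hg, hgα⟩ : ∃ g > 0, 4 * g = t₁ - α := ⟨(t₁ - α) / 4, by linarith, by ring⟩
  obtain ⟨C, hC, hinterior⟩ := exists_interior_lower_bound hc hW (hx₀.1.trans hx₀.2) hℓ hg
  obtain ⟨η, hη, hηε⟩ : ∃ η > 0, C * η = ε := ⟨ε / C, by positivity, by field_simp⟩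
  obtain ⟨δ, hδ, hδη⟩ := hM.exists_abs_sub_lt (β := t₁) hα hη
  have hNz : Tendsto (fun z : ℝ × ℝ => cumWeight ν z.2) (𝓝 (t₁, x₀)) (𝓝 (cumWeight ν x₀)) :=
    ((continuous_cumWeight hν).comp continuous_snd).tendsto (t₁, x₀)
  filter_upwards [hNz.eventually_const_lt (by linarith : cumWeight ν x₁ + ℓ < cumWeight ν x₀),
    hNz.eventually_lt_const (by linarith : cumWeight ν x₀ < cumWeight ν x₂ - ℓ),
    continuous_fst.continuousAt.eventually_const_lt
      (max_lt (sub_lt_self t₁ hg) (sub_lt_self t₁ hδ))] with ⟨t, x⟩ hxl hxr htmax htt₁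
  obtain ⟨htg, _⟩ := max_lt_iff.1 htmax
  refine ge_of_tendsto (((sol.continuousAt_time (hα.trans hαt) x).tendsto.mono_left
    (nhdsWithin_le_nhds (s := Iio t₁))).sub_const (u t x)) ?_
  filter_upwards [Ioo_mem_nhdsLT htt₁] with s hs
  obtain ⟨k, rfl⟩ : ∃ k, s = t + k := ⟨s - t, by ring⟩
  rw [← hηε]
  refine hinterior (fun s y => u (s + k) y - u s y) (α + g) (α + 2 * g) t ((t + (t₁ - k)) / 2) η
    (sol.shift_sub fun τ hτ => ?_) (by linarith) (by linarith) (by linarith [hs.2])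
    (.sub ?_ ?_) hη (fun τ hτ p q _ _ _ => ?_) x hxl.le (by linarith)
  · exact ⟨mem_Ioi.2 (by linarith [hτ.1]), mem_Ioi.2 (by linarith [hτ.1, hs.1])⟩
  · exact hu.comp (f := fun z : ℝ × ℝ => (z.1 + k, z.2)) (by fun_prop) fun z hz =>
      ⟨⟨by linarith [hz.1.1, hs.1], by linarith [hz.1.2, hs.2]⟩, hz.2⟩
  · exact hu.mono (prod_mono (fun τ hτ => ⟨by linarith [hτ.1], by linarith [hτ.2, hs.1, hs.2]⟩)
      subset_rfl)
  · have hτ0 : 0 < τ := by linarith [hτ.1]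
    have hk : 0 < k := by linarith [hs.1]
    rw [mass_shift_sub hν (sol.continuous_apply hτ0) (sol.continuous_apply (by grind))]
    exact (abs_lt.1 (hδη (τ + k) ⟨by linarith [hτ.1], by linarith [hτ.2, hs.2]⟩ τ
      ⟨by linarith [hτ.1], by linarith [hτ.2]⟩ (by grind) p q)).1.le

theorem eventually_abs_sub_le_of_lt (hc : PosCoeff ν a) (hW : 0 ≤ W)
    (sol : IsCanonicalSolOn ν a W u (Ioi 0)) (hM : EquicontinuousMass ν u) (hα : 0 < α)
    (hαt : α < t₁) (hx₀ : x₀ ∈ Ioo x₁ x₂)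
    (hu : ContinuousOn (fun z : ℝ × ℝ => u z.1 z.2) (Ioo α t₁ ×ˢ Icc x₁ x₂)) (hε : 0 < ε) :
    ∀ᶠ z in 𝓝 (t₁, x₀), z.1 < t₁ → |u z.1 z.2 - u t₁ z.2| ≤ ε := by
  filter_upwards [eventually_neg_le_sub_of_lt hc hW sol hM hα hαt hx₀ hu hε,
    eventually_neg_le_sub_of_lt hc hW sol.neg hM.neg hα hαt hx₀ hu.neg hε] with z hz hz' hlt
  exact abs_le.2 ⟨by linarith [hz' hlt], by linarith [hz hlt]⟩

end LeftContinuity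

/-! ### Joint continuity of solutions -/

/-- The slice `u z.1` is Lipschitz at `z.2` with constant `K`, on the scale `1 / K`. -/
def SpaceLipschitzAt (u : ℝ → ℝ → ℝ) (K : ℝ) (z : ℝ × ℝ) : Prop :=
  ∀ x, |x - z.2| < K⁻¹ → |u z.1 x - u z.1 z.2| ≤ K * |x - z.2|

section SpaceLipschitz

variable {u : ℝ → ℝ → ℝ} {K : ℝ} {z : ℝ × ℝ}

theorem exists_nat_spaceLipschitzAt (hu : DifferentiableAt ℝ (u z.1) z.2) :
    ∃ n : ℕ, SpaceLipschitzAt u (n + 1) z := by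
  obtain ⟨C, hC⟩ := hu.hasDerivAt.isBigO_sub.bound
  obtain ⟨δ, hδ, hδC⟩ := Metric.eventually_nhds_iff.1 hC
  obtain ⟨n, hn⟩ := exists_nat_ge (max C δ⁻¹)
  have hδn : ((n : ℝ) + 1)⁻¹ ≤ δ :=
    inv_le_of_inv_le₀ hδ (by linarith [le_max_right C δ⁻¹])
  exact ⟨n, fun x hx => (hδC (hx.trans_le hδn)).trans <|
    mul_le_mul_of_nonneg_right (by linarith [le_max_left C δ⁻¹]) (abs_nonneg _)⟩

theorem SpaceLipschitzAt.of_tendsto {ι : Type*} {l : Filter ι} [l.NeBot] {w : ι → ℝ × ℝ}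
    (hK : 0 < K) (hw : Tendsto w l (𝓝 z)) (hu : ∀ x, ContinuousAt (fun t => u t x) z.1)
    (h : ∀ᶠ i in l, SpaceLipschitzAt u K (w i)) : SpaceLipschitzAt u K z := by
  have hut : ∀ x, Tendsto (fun i => u (w i).1 x) l (𝓝 (u z.1 x)) := fun x =>
    (hu x).tendsto.comp hw.fst_nhds
  have hdist : ∀ x, Tendsto (fun i => |x - (w i).2|) l (𝓝 |x - z.2|) := fun x =>
    (hw.snd_nhds.const_sub x).abs
  have hle : ∀ x, |x - z.2| < K⁻¹ →
      ∀ᶠ i in l, |u (w i).1 x - u (w i).1 (w i).2| ≤ K * |x - (w i).2| := fun x hx => by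
    filter_upwards [h, (hdist x).eventually_lt_const hx] with i hi hxi using hi x hxi
  have hdiff : Tendsto (fun i => u (w i).1 z.2 - u (w i).1 (w i).2) l (𝓝 0) :=
    squeeze_zero_norm' (hle z.2 (by simpa using hK)) (by simpa using (hdist z.2).const_mul K)
  have hdiag : Tendsto (fun i => u (w i).1 (w i).2) l (𝓝 (u z.1 z.2)) := by
    simpa using (hut z.2).sub hdiff
  exact fun x hx => le_of_tendsto_of_tendsto ((hut x).sub hdiag).abs ((hdist x).const_mul K)
    (hle x hx)

theorem isClosed_preimage_spaceLipschitzAt {D : Set (ℝ × ℝ)} (hK : 0 < K)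
    (hu : ∀ z ∈ D, ∀ x, ContinuousAt (fun t => u t x) z.1) :
    IsClosed (Subtype.val ⁻¹' {z | SpaceLipschitzAt u K z} : Set D) := by
  refine IsSeqClosed.isClosed fun w z hw hlim => ?_
  exact .of_tendsto hK ((continuous_subtype_val.tendsto z).comp hlim) (hu z z.2)
    (Eventually.of_forall hw)

end SpaceLipschitz

theorem exists_eventually_mem_of_isLocallyClosed {X : Type*} [TopologicalSpace X]
    [LocallyCompactSpace X] [R1Space X] {D : Set X} {F : ℕ → Set X} (hD : IsLocallyClosed D)
    (hne : D.Nonempty) (hF : ∀ n, IsClosed (Subtype.val ⁻¹' F n : Set D)) (hDF : D ⊆ ⋃ n, F n) :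
    ∃ z ∈ D, ∃ n, ∀ᶠ w in 𝓝 z, w ∈ D → w ∈ F n := by
  have : LocallyCompactSpace D := hD.locallyCompactSpace
  have : Nonempty D := hne.to_subtype
  obtain ⟨n, z, hz⟩ := nonempty_interior_of_iUnion_of_closed hF <| by
    rw [← preimage_iUnion, preimage_eq_univ_iff, Subtype.range_coe]
    exact hDF
  rw [mem_interior_iff_mem_nhds, nhds_subtype, mem_comap] at hz
  obtain ⟨s, hs, hsF⟩ := hz
  exact ⟨z, z.2, n, mem_of_superset hs fun w hw hwD => @hsF ⟨w, hwD⟩ hw⟩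

theorem exists_last_notMem {O : Set (ℝ × ℝ)} {J : Set ℝ} {s t x : ℝ} (hO : IsOpen O)
    (hJ : IsCompact J) (hst : s ≤ t) (hx : x ∈ J) (hxO : (s, x) ∉ O) :
    ∃ α ∈ Icc s t, (∃ y ∈ J, (α, y) ∉ O) ∧ Ioc α t ×ˢ J ⊆ O := by
  obtain ⟨α, ⟨⟨α, y⟩, ⟨⟨hα, hy⟩, hyO⟩, rfl⟩, hmax⟩ :=
    (((isCompact_Icc.prod hJ).diff hO).image continuous_fst).exists_isGreatest
      ⟨s, (s, x), ⟨⟨left_mem_Icc.2 hst, hx⟩, hxO⟩, rfl⟩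
  refine ⟨α, hα, ⟨y, hy, hyO⟩, fun z hz => ?_⟩
  by_contra hzO
  exact (hmax ⟨z, ⟨⟨⟨hα.1.trans hz.1.1.le, hz.1.2⟩, hz.2⟩, hzO⟩, rfl⟩).not_gt hz.1.1

/-- At time `t`, the function `u` is within `ε` of `c` at both endpoints of `[x₁, x₂]`, and on all
of `[x₁, x₂]` if this slice is not contained in `O`. -/
structure IsPinched (u : ℝ → ℝ → ℝ) (O : Set (ℝ × ℝ)) (c ε x₁ x₂ t : ℝ) : Prop where
  left : |u t x₁ - c| < ε
  right : |u t x₂ - c| < ε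
  slice : ∀ y ∈ Icc x₁ x₂, (t, y) ∉ O → ∀ x ∈ Icc x₁ x₂, |u t x - c| ≤ ε

section JointContinuity

variable {ν a : ℝ → ℝ} {W : ℝ} {u : ℝ → ℝ → ℝ} {O : Set (ℝ × ℝ)} {t₀ x₀ ε K : ℝ}

theorem exists_eventually_isPinched (hK : 0 < K) (hε : 0 < ε)
    (hu : ∀ x, ContinuousAt (fun t => u t x) t₀) (hz₀ : (t₀, x₀) ∉ O)
    (hlip : ∀ᶠ z in 𝓝 (t₀, x₀), z ∉ O → SpaceLipschitzAt u K z) :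
    ∃ ρ > 0, ∀ᶠ t in 𝓝 t₀, IsPinched u O (u t₀ x₀) ε (x₀ - ρ) (x₀ + ρ) t := by
  have hlip₀ := hlip.self_of_nhds hz₀
  rw [nhds_prod_eq] at hlip
  obtain ⟨time, htime, space, hspace, hlip⟩ := eventually_prod_iff.1 hlip
  obtain ⟨r, hr, hrspace⟩ := (nhds_basis_Icc_pos x₀).mem_iff.1 hspace
  obtain ⟨ρ, hρ, hρlt⟩ := exists_between
    (lt_min hr (lt_min (half_pos (inv_pos.2 hK)) (by positivity : 0 < ε / (8 * K))))
  obtain ⟨hρr, hρKε⟩ := lt_min_iff.1 hρlt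
  obtain ⟨hρK, hρε⟩ := lt_min_iff.1 hρKε
  have hKρ : 8 * (K * ρ) < ε := by
    rw [lt_div_iff₀ (by positivity)] at hρε
    linarith
  have hclose : ∀ x ∈ Icc (x₀ - ρ) (x₀ + ρ), ∀ᶠ t in 𝓝 t₀, |u t x - u t₀ x₀| < ε / 2 :=
    fun x hx => by
      have hxρ : |x - x₀| ≤ ρ := abs_le.2 ⟨by linarith [hx.1], by linarith [hx.2]⟩
      have hlt : |u t₀ x - u t₀ x₀| < ε / 2 :=
        (hlip₀ x (by dsimp only; linarith)).trans_lt
          (by linarith [mul_le_mul_of_nonneg_left hxρ hK.le])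
      exact ((hu x).sub_const _).abs.eventually_lt_const hlt
  refine ⟨ρ, hρ, ?_⟩
  filter_upwards [htime, hclose x₀ ⟨by linarith, by linarith⟩,
    hclose (x₀ - ρ) ⟨le_rfl, by linarith⟩, hclose (x₀ + ρ) ⟨by linarith, le_rfl⟩]
    with t ht h₀ hl hr
  refine ⟨by linarith, by linarith, fun y hy hyO x hx => ?_⟩
  have hLy := hlip ht (hrspace ⟨by linarith [hy.1], by linarith [hy.2]⟩) hyO
  have hxy : |x - y| ≤ 2 * ρ := abs_le.2 ⟨by linarith [hx.1, hy.2], by linarith [hx.2, hy.1]⟩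
  have hx₀y : |x₀ - y| ≤ ρ := abs_le.2 ⟨by linarith [hy.2], by linarith [hy.1]⟩
  have hux := hLy x (by dsimp only; linarith)
  have hux₀ := hLy x₀ (by dsimp only; linarith)
  rw [abs_sub_comm] at hux₀
  linarith [abs_sub_le (u t x) (u t y) (u t₀ x₀), abs_sub_le (u t y) (u t x₀) (u t₀ x₀),
    mul_le_mul_of_nonneg_left hxy hK.le, mul_le_mul_of_nonneg_left hx₀y hK.le]

theorem abs_sub_le_of_isPinched {c s t x₁ x₂ x y : ℝ} (hc : PosCoeff ν a) (hW : 0 ≤ W)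
    (sol : IsCanonicalSolOn ν a W u (Ioi 0)) (hM : EquicontinuousMass ν u) (hO : IsOpen O)
    (huO : ContinuousOn (fun z : ℝ × ℝ => u z.1 z.2) O) (hs : 0 < s) (hst : s ≤ t)
    (hpin : ∀ τ ∈ Icc s t, IsPinched u O c ε x₁ x₂ τ) (hy : y ∈ Icc x₁ x₂) (hyO : (s, y) ∉ O)
    (hx : x ∈ Ioo x₁ x₂) : |u t x - c| ≤ ε := by
  obtain ⟨α, hα, ⟨w, hw, hwO⟩, hsub⟩ := exists_last_notMem hO isCompact_Icc hst hy hyO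
  rcases hα.2.eq_or_lt with rfl | hαt
  · exact (hpin α hα).slice w hw hwO x (Ioo_subset_Icc_self hx)
  · have hmem : ∀ τ ∈ Ioo α t, τ ∈ Icc s t := fun τ hτ => ⟨hα.1.trans hτ.1.le, hτ.2.le⟩
    exact abs_sub_le_of_parabolic_boundary hc hW sol hM (hs.trans_le hα.1) hαt
      (huO.mono ((prod_mono Ioo_subset_Ioc_self subset_rfl).trans hsub))
      (fun τ hτ => (hpin τ (hmem τ hτ)).left) (fun τ hτ => (hpin τ (hmem τ hτ)).right)
      ((hpin α hα).slice w hw hwO) hx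

theorem eventually_abs_sub_le_of_isPinched {ρ : ℝ} (hc : PosCoeff ν a) (hW : 0 ≤ W)
    (sol : IsCanonicalSolOn ν a W u (Ioi 0)) (hM : EquicontinuousMass ν u) (hO : IsOpen O)
    (huO : ContinuousOn (fun z : ℝ × ℝ => u z.1 z.2) O) (ht₀ : 0 < t₀) (hz₀ : (t₀, x₀) ∉ O)
    (hε : 0 < ε) (hρ : 0 < ρ)
    (hpin : ∀ᶠ t in 𝓝 t₀, IsPinched u O (u t₀ x₀) ε (x₀ - ρ) (x₀ + ρ) t) :
    ∀ᶠ z in 𝓝 (t₀, x₀), |u z.1 z.2 - u t₀ x₀| ≤ 2 * ε := by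
  obtain ⟨δ, hδ, hδpin⟩ := (nhds_basis_Icc_pos t₀).mem_iff.1 (hpin.and (lt_mem_nhds ht₀))
  have hx₀ : x₀ ∈ Ioo (x₀ - ρ) (x₀ + ρ) := ⟨by linarith, by linarith⟩
  have hafter : ∀ s t x, t₀ - δ ≤ s → s ≤ t → t ≤ t₀ + δ → x ∈ Ioo (x₀ - ρ) (x₀ + ρ) →
      (∃ y ∈ Icc (x₀ - ρ) (x₀ + ρ), (s, y) ∉ O) → |u t x - u t₀ x₀| ≤ ε := by
    rintro s t x hs hst ht hx ⟨y, hy, hyO⟩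
    exact abs_sub_le_of_isPinched hc hW sol hM hO huO (hδpin ⟨hs, hst.trans ht⟩).2 hst
      (fun τ hτ => (hδpin ⟨hs.trans hτ.1, hτ.2.trans ht⟩).1) hy hyO hx
  have hbox : Ioo (t₀ - δ) (t₀ + δ) ×ˢ Ioo (x₀ - ρ) (x₀ + ρ) ∈ 𝓝 (t₀, x₀) :=
    prod_mem_nhds (Ioo_mem_nhds (by linarith) (by linarith)) (Ioo_mem_nhds hx₀.1 hx₀.2)
  by_cases hbad : ∃ s ∈ Ioo (t₀ - δ) t₀, ∃ y ∈ Icc (x₀ - ρ) (x₀ + ρ), (s, y) ∉ O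
  · obtain ⟨s, hs, hsO⟩ := hbad
    filter_upwards [hbox, continuous_fst.continuousAt.eventually_const_lt hs.2] with z hz hsz
    linarith [hafter s z.1 z.2 hs.1.le hsz.le hz.1.2.le hz.2 hsO]
  · push Not at hbad
    have hleft := eventually_abs_sub_le_of_lt hc hW sol hM
      (hδpin ⟨le_rfl, by linarith⟩ : _ ∧ 0 < t₀ - δ).2 (by linarith) hx₀
      (huO.mono fun z hz => hbad z.1 hz.1 z.2 hz.2) hε
    filter_upwards [hbox, hleft] with z hz hzleft
    have hx₀' := Ioo_subset_Icc_self hx₀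
    rcases lt_or_ge z.1 t₀ with hlt | hge
    · have hslice := (hδpin ⟨by linarith, by linarith⟩ : IsPinched _ _ _ _ _ _ t₀ ∧ _).1.slice
        x₀ hx₀' hz₀ z.2 (Ioo_subset_Icc_self hz.2)
      linarith [hzleft hlt, abs_sub_le (u z.1 z.2) (u t₀ z.2) (u t₀ x₀)]
    · linarith [hafter t₀ z.1 z.2 (by linarith) hge hz.1.2.le hz.2 ⟨x₀, hx₀', hz₀⟩]

theorem continuousAt_of_eventually_spaceLipschitzAt (hc : PosCoeff ν a) (hW : 0 ≤ W)
    (sol : IsCanonicalSolOn ν a W u (Ioi 0)) (hM : EquicontinuousMass ν u) (hO : IsOpen O)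
    (huO : ContinuousOn (fun z : ℝ × ℝ => u z.1 z.2) O) (hK : 0 < K) {z₀ : ℝ × ℝ} (ht₀ : 0 < z₀.1)
    (hz₀ : z₀ ∉ O) (hlip : ∀ᶠ z in 𝓝 z₀, z ∉ O → SpaceLipschitzAt u K z) :
    ContinuousAt (fun z : ℝ × ℝ => u z.1 z.2) z₀ := by
  refine Metric.tendsto_nhds.2 fun ε hε => ?_
  obtain ⟨ρ, hρ, hpin⟩ := exists_eventually_isPinched hK (by linarith : 0 < ε / 3)
    (sol.continuousAt_time ht₀) hz₀ hlip
  filter_upwards [eventually_abs_sub_le_of_isPinched hc hW sol hM hO huO ht₀ hz₀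
    (by linarith) hρ hpin] with z hz
  rw [Real.dist_eq]
  linarith

/-- If `u` were not continuous, then by Baire's theorem the slices of `u` would be uniformly
Lipschitz at all bad points near some bad point. -/
theorem IsCanonicalSolOn.continuousOn (hc : PosCoeff ν a) (hW : 0 ≤ W)
    (sol : IsCanonicalSolOn ν a W u (Ioi 0)) (hM : EquicontinuousMass ν u) :
    ContinuousOn (fun z : ℝ × ℝ => u z.1 z.2) (Ioi 0 ×ˢ univ) := by
  set O : Set (ℝ × ℝ) := interior {z | ContinuousAt (fun z : ℝ × ℝ => u z.1 z.2) z}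
  have hO : IsOpen O := isOpen_interior
  have huO : ∀ z ∈ O, ContinuousAt (fun z : ℝ × ℝ => u z.1 z.2) z := fun z hz =>
    interior_subset hz
  have hpos : IsOpen (Ioi (0 : ℝ) ×ˢ (univ : Set ℝ)) := isOpen_Ioi.prod isOpen_univ
  suffices hsub : Ioi (0 : ℝ) ×ˢ (univ : Set ℝ) ⊆ O from
    fun z hz => (huO z (hsub hz)).continuousWithinAt
  by_contra hnot
  obtain ⟨z, ⟨hz0, hzO⟩, n, hn⟩ := exists_eventually_mem_of_isLocallyClosed
    (F := fun n : ℕ => {z | SpaceLipschitzAt u (n + 1) z})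
    (hpos.isLocallyClosed.inter hO.isClosed_compl.isLocallyClosed) (not_subset.1 hnot)
    (fun n => isClosed_preimage_spaceLipschitzAt (by positivity) fun z hz x =>
      sol.continuousAt_time hz.1.1 x)
    (fun z hz => by
      obtain ⟨ut, ux, fl, hu⟩ := sol
      exact mem_iUnion.2 (exists_nat_spaceLipschitzAt
        (hu z.1 hz.1.1 z.2).2.1.differentiableAt))
  refine hzO (mem_interior_iff_mem_nhds.2 ?_)
  filter_upwards [hn.eventually_nhds, hpos.mem_nhds hz0] with w hw hw0
  by_cases hwO : w ∈ O
  · exact huO w hwO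
  · refine continuousAt_of_eventually_spaceLipschitzAt hc hW sol hM hO
      (fun z hz => (huO z hz).continuousWithinAt) (by positivity : (0 : ℝ) < n + 1) hw0.1 hwO ?_
    filter_upwards [hw, hpos.mem_nhds hw0] with v hv hv0 hvO using hv ⟨hv0, hvO⟩

end JointContinuity

/-! ### Fundamental solutions with a fixed pole -/

/-- Scheffé's lemma. -/
theorem tendsto_integral_abs_sub_of_tendsto_integral {X ι : Type*} [MeasurableSpace X]
    {m : Measure X} {l : Filter ι} [l.IsCountablyGenerated] {f : ι → X → ℝ} {g : X → ℝ}
    (hf0 : ∀ᶠ i in l, ∀ᵐ x ∂m, 0 ≤ f i x) (hg0 : ∀ᵐ x ∂m, 0 ≤ g x)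
    (hf : ∀ᶠ i in l, Integrable (f i) m) (hg : Integrable g m)
    (hlim : ∀ᵐ x ∂m, Tendsto (fun i => f i x) l (𝓝 (g x)))
    (hint : Tendsto (fun i => ∫ x, f i x ∂m) l (𝓝 (∫ x, g x ∂m))) :
    Tendsto (fun i => ∫ x, |f i x - g x| ∂m) l (𝓝 0) := by
  have habs : ∀ i x, |f i x - g x| = (f i x - g x) + 2 * max (g x - f i x) 0 := by grind
  have hmax : Tendsto (fun i => ∫ x, max (g x - f i x) 0 ∂m) l (𝓝 (∫ _, (0 : ℝ) ∂m)) := by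
    refine tendsto_integral_filter_of_dominated_convergence g ?_ ?_ hg ?_
    · filter_upwards [hf] with i hi
      exact (hg.sub hi).pos_part.aestronglyMeasurable
    · filter_upwards [hf0] with i hi
      filter_upwards [hi, hg0] with x hx hgx
      rw [Real.norm_of_nonneg (le_max_right _ _)]
      exact max_le (by linarith) hgx
    · filter_upwards [hlim] with x hx
      simpa using (hx.const_sub (g x)).max (tendsto_const_nhds (x := (0 : ℝ)))
  have hsum := (hint.sub_const (∫ x, g x ∂m)).add (hmax.const_mul 2)
  simp only [sub_self, integral_zero, mul_zero, add_zero] at hsum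
  refine hsum.congr' ?_
  filter_upwards [hf] with i hi
  have hpart : Integrable (fun x => max (g x - f i x) 0) m := (hg.sub hi).pos_part
  simp only [habs]
  rw [integral_add (f := fun x => f i x - g x) (hi.sub hg) (hpart.const_mul 2),
    integral_const_mul, integral_sub hi hg]

/-- The part of the definition of a fundamental solution that concerns a single pole `y`: `u` is a
nonnegative solution of total mass one that starts from the Dirac mass at `y`. -/
structure IsFundSolAt (ν a : ℝ → ℝ) (W y : ℝ) (u : ℝ → ℝ → ℝ) : Prop where
  isCanonicalSolOn : IsCanonicalSolOn ν a W u (Ioi 0)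
  nonneg : ∀ t, 0 < t → ∀ x, 0 ≤ u t x
  integral_eq_one : ∀ t, 0 < t → ∫ x, ν x * u t x = 1
  tendsto_integral : ∀ φ : ℝ → ℝ, Continuous φ → (∃ B, ∀ x, |φ x| ≤ B) →
    Tendsto (fun t => ∫ x, ν x * u t x * φ x) (𝓝[>] 0) (𝓝 (φ y))

theorem mass_nonneg {ν : ℝ → ℝ} {u : ℝ → ℝ → ℝ} {t p q : ℝ} (hν : ∀ x, 0 ≤ ν x)
    (hu : ∀ x, 0 ≤ u t x) (hpq : p ≤ q) : 0 ≤ mass ν u t p q :=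
  intervalIntegral.integral_nonneg hpq fun x _ => mul_nonneg (hν x) (hu x)

namespace IsFundSolAt

variable {ν a : ℝ → ℝ} {W y : ℝ} {u : ℝ → ℝ → ℝ} {s t p q : ℝ}

theorem integrable (hu : IsFundSolAt ν a W y u) (ht : 0 < t) : Integrable fun x => ν x * u t x :=
  .of_integral_ne_zero (by rw [hu.integral_eq_one t ht]; exact one_ne_zero)

theorem abs_mass_sub_le (hu : IsFundSolAt ν a W y u) (hs : 0 < s) (ht : 0 < t) :
    |mass ν u s p q - mass ν u t p q| ≤ ∫ x, |ν x * u s x - ν x * u t x| := by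
  have hst := (hu.integrable hs).sub (hu.integrable ht)
  rw [mass, mass, ← intervalIntegral.integral_sub (hu.integrable hs).intervalIntegrable
    (hu.integrable ht).intervalIntegrable]
  exact intervalIntegral.norm_integral_le_integral_norm_uIoc.trans
    (setIntegral_le_integral hst.norm (ae_of_all _ fun x => norm_nonneg _))

theorem equicontinuousMass (hu : IsFundSolAt ν a W y u) (hν : ∀ x, 0 ≤ ν x) :
    EquicontinuousMass ν u := by
  intro t ht
  have ht0 : 0 < t := ht
  have hlim : Tendsto (fun s => ∫ x, |ν x * u s x - ν x * u t x|) (𝓝 t) (𝓝 0) := by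
    refine tendsto_integral_abs_sub_of_tendsto_integral ?_
      (ae_of_all _ fun x => mul_nonneg (hν x) (hu.nonneg t ht0 x)) ?_ (hu.integrable ht0)
      (ae_of_all _ fun x => (hu.isCanonicalSolOn.continuousAt_time ht x).tendsto.const_mul (ν x))
      (tendsto_const_nhds.congr' ?_)
    all_goals filter_upwards [lt_mem_nhds ht0] with s hs
    · exact ae_of_all _ fun x => mul_nonneg (hν x) (hu.nonneg s hs x)
    · exact hu.integrable hs
    · rw [hu.integral_eq_one s hs, hu.integral_eq_one t ht0]
  rw [Metric.uniformity_basis_dist.equicontinuousWithinAt_iff_right]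
  intro ε hε
  filter_upwards [nhdsWithin_le_nhds (hlim.eventually (gt_mem_nhds hε)), self_mem_nhdsWithin]
    with s hsε hs I
  rw [dist_comm, Real.dist_eq]
  exact (hu.abs_mass_sub_le hs ht0).trans_lt hsε

theorem continuousOn (hu : IsFundSolAt ν a W y u) (hc : PosCoeff ν a) (hW : 0 ≤ W) :
    ContinuousOn (fun z : ℝ × ℝ => u z.1 z.2) (Ioi 0 ×ˢ univ) :=
  IsCanonicalSolOn.continuousOn hc hW hu.isCanonicalSolOn
    (hu.equicontinuousMass fun x => (hc.weight_pos x).le)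

theorem integral_mul_le_mass (hu : IsFundSolAt ν a W y u) (hν : ∀ x, 0 ≤ ν x) (ht : 0 < t)
    (hpq : p ≤ q) {φ : ℝ → ℝ} (hφ0 : ∀ x, 0 ≤ φ x) (hφ1 : ∀ x, φ x ≤ 1)
    (hsupp : ∀ x ∉ Ioc p q, φ x = 0) : ∫ x, ν x * u t x * φ x ≤ mass ν u t p q := by
  have hpos : ∀ x, 0 ≤ ν x * u t x := fun x => mul_nonneg (hν x) (hu.nonneg t ht x)
  rw [mass, intervalIntegral.integral_of_le hpq, ← integral_indicator measurableSet_Ioc]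
  refine integral_mono_of_nonneg (ae_of_all _ fun x => mul_nonneg (hpos x) (hφ0 x))
    ((hu.integrable ht).indicator measurableSet_Ioc) (ae_of_all _ fun x => ?_)
  by_cases hx : x ∈ Ioc p q
  · simpa only [indicator_of_mem hx] using mul_le_of_le_one_right (hpos x) (hφ1 x)
  · simp only [indicator_of_notMem hx, hsupp x hx, mul_zero, le_refl]

theorem eventually_le_mass (hu : IsFundSolAt ν a W y u) (hc : PosCoeff ν a) (hW : 0 ≤ W)
    (hs : 0 < s) :
    ∀ᶠ t in 𝓝[>] 0, ∀ p q, p ≤ q → cumWeight ν p - cumWeight ν y - W * t < -s →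
      s < cumWeight ν q - cumWeight ν y - W * t → 1 - s ≤ mass ν u t p q := by
  have hN := continuous_cumWeight hc.continuous_weight
  have hNm := (strictMono_cumWeight hc.continuous_weight hc.weight_pos).monotone
  set φ : ℝ → ℝ := fun x => max 0 (1 - 2 / s * |cumWeight ν x - cumWeight ν y|)
  have hφc : Continuous φ := by fun_prop
  have hφ0 : ∀ x, 0 ≤ φ x := fun x => le_max_left _ _
  have hφ1 : ∀ x, φ x ≤ 1 := fun x => max_le zero_le_one (sub_le_self _ (by positivity))
  have hφy : φ y = 1 := by simp [φ]
  have hsupp : ∀ x, s / 2 ≤ |cumWeight ν x - cumWeight ν y| → φ x = 0 := fun x hx => by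
    refine max_eq_left (sub_nonpos.2 ?_)
    calc 1 = 2 / s * (s / 2) := by field_simp
      _ ≤ 2 / s * |cumWeight ν x - cumWeight ν y| := by gcongr
  have hlim := hu.tendsto_integral φ hφc ⟨1, fun x => by rw [abs_of_nonneg (hφ0 x)]; exact hφ1 x⟩
  rw [hφy] at hlim
  have hdrift : ∀ᶠ t in 𝓝[>] (0 : ℝ), W * t < s / 2 :=
    nhdsWithin_le_nhds ((continuous_const_mul W).continuousAt.eventually
      (gt_mem_nhds (by simpa using half_pos hs)))
  filter_upwards [hlim.eventually (lt_mem_nhds (sub_lt_self 1 hs)), hdrift, self_mem_nhdsWithin]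
    with t hφt hWt ht p q hpq hp hq
  have hWt0 : 0 ≤ W * t := mul_nonneg hW (le_of_lt ht)
  refine hφt.le.trans (hu.integral_mul_le_mass (fun x => (hc.weight_pos x).le) ht hpq hφ0 hφ1
    fun x hx => hsupp x ?_)
  rw [mem_Ioc, not_and_or, not_lt, not_le] at hx
  rcases hx with hx | hx
  · exact le_abs.2 (.inr (by linarith [hNm hx]))
  · exact le_abs.2 (.inl (by linarith [hNm hx.le]))

end IsFundSolAt

section CumWeightAtTop

variable {ν : ℝ → ℝ} {m : ℝ} (hν : Continuous ν) (hm : 0 < m) (hmν : ∀ x, m ≤ ν x)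
include hν hmν

theorem mul_sub_le_cumWeight_sub {p q : ℝ} (hpq : p ≤ q) :
    m * (q - p) ≤ cumWeight ν q - cumWeight ν p :=
  mul_sub_le_image_sub_of_le_deriv (fun x => (hasDerivAt_cumWeight hν x).differentiableAt)
    (fun x => by rw [(hasDerivAt_cumWeight hν x).deriv]; exact hmν x) hpq

include hm

theorem tendsto_cumWeight_atTop : Tendsto (cumWeight ν) atTop atTop := by
  refine tendsto_atTop_mono' _ ?_ (tendsto_atTop_add_const_left _ (cumWeight ν 0)
    (tendsto_id.const_mul_atTop hm))
  filter_upwards [eventually_ge_atTop 0] with x hx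
  have := mul_sub_le_cumWeight_sub hν hmν hx
  simp only [sub_zero] at this
  simp only [id]
  linarith

theorem tendsto_cumWeight_atBot : Tendsto (cumWeight ν) atBot atBot := by
  refine tendsto_atBot_mono' _ ?_ (tendsto_atBot_add_const_left _ (cumWeight ν 0)
    (tendsto_id.const_mul_atBot hm))
  filter_upwards [eventually_le_atBot 0] with x hx
  have := mul_sub_le_cumWeight_sub hν hmν hx
  simp only [zero_sub] at this
  simp only [id]
  linarith

end CumWeightAtTop

/-! ### Concentration of mass near the drifting pole -/

/-- A travelling exponential, which solves `∂ₜE = Λ ∂_z²E - W ∂_z E`. -/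
noncomputable def travellingExp (Λ W κ n t z : ℝ) : ℝ :=
  Real.exp (κ * (z - n - W * t) + κ ^ 2 * Λ * t)

section TravellingExp

variable {Λ W κ n t z : ℝ}

theorem travellingExp_pos : 0 < travellingExp Λ W κ n t z := Real.exp_pos _

theorem continuous_travellingExp {X : Type*} [TopologicalSpace X] {f g : X → ℝ} (hf : Continuous f)
    (hg : Continuous g) : Continuous fun x => travellingExp Λ W κ n (f x) (g x) := by
  unfold travellingExp
  fun_prop

theorem hasDerivAt_travellingExp_time :
    HasDerivAt (fun t => travellingExp Λ W κ n t z)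
      (travellingExp Λ W κ n t z * (κ ^ 2 * Λ - κ * W)) t :=
  (hasDerivAt_of_eq_quadratic (κ * (z - n)) (κ ^ 2 * Λ - κ * W) 0 (fun t => by ring)
    (by ring)).exp

theorem hasDerivAt_travellingExp_space :
    HasDerivAt (fun z => travellingExp Λ W κ n t z) (travellingExp Λ W κ n t z * κ) z :=
  (hasDerivAt_of_eq_quadratic (κ * (-n - W * t) + κ ^ 2 * Λ * t) κ 0 (fun z => by ring)
    (by ring)).exp

theorem one_le_travellingExp (hΛ : 0 ≤ Λ) (ht : 0 ≤ t) (h : 0 ≤ κ * (z - n - W * t)) :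
    1 ≤ travellingExp Λ W κ n t z :=
  Real.one_le_exp (by positivity)

theorem travellingExp_le_exp_neg_two {d : ℝ} (hΛ : 0 ≤ Λ) (hκ : κ ^ 2 * d ^ 2 = 1)
    (htd : t ≤ d ^ 2) (h : κ * (z - n - W * t) ≤ -(Λ + 2)) :
    travellingExp Λ W κ n t z ≤ Real.exp (-2) := by
  have : κ ^ 2 * Λ * t ≤ Λ := by
    calc κ ^ 2 * Λ * t ≤ κ ^ 2 * Λ * d ^ 2 := by gcongr
      _ = Λ := by rw [mul_right_comm, hκ, one_mul]
  exact Real.exp_le_exp.2 (by linarith)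

end TravellingExp

/-- The barrier showing that most of the mass sits near the drifting pole `n + W t`: `1`, less an
exponential tail on each side and an error, controlled by `s`, that makes the barrier negative far
away and strictly subparabolic. -/
noncomputable def concentrationBarrier (Λ W κ n s : ℝ) : SmoothBarrier where
  toFun t z₁ z₂ := 1 - s - s * ((z₁ - n - W * t) ^ 2 + (z₂ - n - W * t) ^ 2) - 4 * Λ * s * t
    - travellingExp Λ W κ (n - s) t z₁ - travellingExp Λ W (-κ) (n + s) t z₂
  dt t z₁ z₂ := 2 * s * W * ((z₁ - n - W * t) + (z₂ - n - W * t)) - 4 * Λ * s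
    - travellingExp Λ W κ (n - s) t z₁ * (κ ^ 2 * Λ - κ * W)
    - travellingExp Λ W (-κ) (n + s) t z₂ * ((-κ) ^ 2 * Λ - -κ * W)
  d1 t z₁ _ := -(2 * s * (z₁ - n - W * t)) - travellingExp Λ W κ (n - s) t z₁ * κ
  d2 t _ z₂ := -(2 * s * (z₂ - n - W * t)) - travellingExp Λ W (-κ) (n + s) t z₂ * -κ
  d11 t z₁ _ := -(2 * s) - travellingExp Λ W κ (n - s) t z₁ * κ * κ
  d22 t _ z₂ := -(2 * s) - travellingExp Λ W (-κ) (n + s) t z₂ * -κ * -κ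
  continuous := by
    refine (Continuous.sub (by fun_prop) ?_).sub ?_ <;>
      exact continuous_travellingExp (by fun_prop) (by fun_prop)
  hasDerivAt_dt t z₁ z₂ := ((hasDerivAt_of_eq_quadratic
    (1 - s - s * ((z₁ - n) ^ 2 + (z₂ - n) ^ 2))
    (2 * s * W * ((z₁ - n) + (z₂ - n)) - 4 * Λ * s) (-(2 * s * W ^ 2))
    (fun t => by ring) (by ring)).sub hasDerivAt_travellingExp_time).sub
      hasDerivAt_travellingExp_time
  hasDerivAt_d1 t z₁ z₂ := ((hasDerivAt_of_eq_quadratic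
    (1 - s - s * ((-n - W * t) ^ 2 + (z₂ - n - W * t) ^ 2) - 4 * Λ * s * t)
    (-(2 * s * (-n - W * t))) (-s)
    (fun z => by ring) (by ring)).sub hasDerivAt_travellingExp_space).sub_const _
  hasDerivAt_d2 t z₁ z₂ := ((hasDerivAt_of_eq_quadratic
    (1 - s - s * ((z₁ - n - W * t) ^ 2 + (-n - W * t) ^ 2) - 4 * Λ * s * t)
    (-(2 * s * (-n - W * t))) (-s)
    (fun z => by ring) (by ring)).sub_const _).sub hasDerivAt_travellingExp_space
  hasDerivAt_d11 t z₁ _ := (hasDerivAt_of_eq_quadratic (-(2 * s * (-n - W * t))) (-(2 * s)) 0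
    (fun z => by ring) (by ring)).sub (hasDerivAt_travellingExp_space.mul_const κ)
  hasDerivAt_d22 t _ z₂ := (hasDerivAt_of_eq_quadratic (-(2 * s * (-n - W * t))) (-(2 * s)) 0
    (fun z => by ring) (by ring)).sub (hasDerivAt_travellingExp_space.mul_const (-κ))

section Concentration

variable {ν a : ℝ → ℝ} {W Λ κ n s d t p q y τ₀ τ₁ τ₂ τ₃ a₀ b₀ R : ℝ} {u : ℝ → ℝ → ℝ}

theorem concentrationBarrier_le (hΛ : 0 ≤ Λ) (hs : 0 ≤ s) (ht : 0 ≤ t) (z₁ z₂ : ℝ) :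
    concentrationBarrier Λ W κ n s t z₁ z₂ ≤ 1 - s
      - s * ((z₁ - n - W * t) ^ 2 + (z₂ - n - W * t) ^ 2)
      - travellingExp Λ W κ (n - s) t z₁ - travellingExp Λ W (-κ) (n + s) t z₂ := by
  have : 0 ≤ 4 * Λ * s * t := by positivity
  simp only [concentrationBarrier]
  linarith

theorem concentrationBarrier_le_one_sub (hΛ : 0 ≤ Λ) (hs : 0 ≤ s) (ht : 0 ≤ t) (z₁ z₂ : ℝ) :
    concentrationBarrier Λ W κ n s t z₁ z₂ ≤ 1 - s := by
  have hfar : 0 ≤ s * ((z₁ - n - W * t) ^ 2 + (z₂ - n - W * t) ^ 2) := by positivity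
  linarith [concentrationBarrier_le (W := W) (κ := κ) (n := n) hΛ hs ht z₁ z₂,
    travellingExp_pos (Λ := Λ) (W := W) (κ := κ) (n := n - s) (t := t) (z := z₁),
    travellingExp_pos (Λ := Λ) (W := W) (κ := -κ) (n := n + s) (t := t) (z := z₂)]

theorem concentrationBarrier_nonpos {z₁ z₂ : ℝ} (hΛ : 0 ≤ Λ) (hκ : 0 ≤ κ) (hs : 0 ≤ s)
    (ht : 0 ≤ t) (h : z₂ - n - W * t ≤ s ∨ -s ≤ z₁ - n - W * t ∨
      1 ≤ s * ((z₁ - n - W * t) ^ 2 + (z₂ - n - W * t) ^ 2)) :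
    concentrationBarrier Λ W κ n s t z₁ z₂ ≤ 0 := by
  have hle := concentrationBarrier_le (W := W) (κ := κ) (n := n) hΛ hs ht z₁ z₂
  have hfar : 0 ≤ s * ((z₁ - n - W * t) ^ 2 + (z₂ - n - W * t) ^ 2) := by positivity
  have h₁ := travellingExp_pos (Λ := Λ) (W := W) (κ := κ) (n := n - s) (t := t) (z := z₁)
  have h₂ := travellingExp_pos (Λ := Λ) (W := W) (κ := -κ) (n := n + s) (t := t) (z := z₂)
  rcases h with h | h | h
  · have := one_le_travellingExp (W := W) (κ := -κ) (n := n + s) (z := z₂) hΛ ht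
      (by rw [neg_mul_comm]; exact mul_nonneg hκ (by linarith))
    linarith
  · have := one_le_travellingExp (W := W) (κ := κ) (n := n - s) (z := z₁) hΛ ht
      (mul_nonneg hκ (by linarith))
    linarith
  · linarith

theorem concentrationBarrier_dt_lt (hΛ : ∀ x, ν x ^ 2 * a x < Λ) (hs : 0 < s) :
    (concentrationBarrier Λ W κ n s).dt t (cumWeight ν p) (cumWeight ν q) <
      (concentrationBarrier Λ W κ n s).spatialOp ν a W t p q := by
  have hpos : ∀ κ n z, 0 ≤ travellingExp Λ W κ n t z * κ ^ 2 := fun κ n z =>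
    mul_nonneg travellingExp_pos.le (sq_nonneg κ)
  have hp := mul_lt_mul_of_pos_right (hΛ p)
    (by linarith [hpos κ (n - s) (cumWeight ν p)] :
      0 < 2 * s + travellingExp Λ W κ (n - s) t (cumWeight ν p) * κ ^ 2)
  have hq := mul_lt_mul_of_pos_right (hΛ q)
    (by linarith [hpos (-κ) (n + s) (cumWeight ν q)] :
      0 < 2 * s + travellingExp Λ W (-κ) (n + s) t (cumWeight ν q) * (-κ) ^ 2)
  simp only [concentrationBarrier, SmoothBarrier.spatialOp]
  linear_combination hp + hq

theorem isSubbarrier_concentrationBarrier (hc : PosCoeff ν a) (hW : 0 ≤ W)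
    (hΛ : ∀ x, ν x ^ 2 * a x < Λ) (hκ : 0 ≤ κ) (hs : 0 < s) (hR : 0 ≤ R) (hsR : 1 ≤ s * R ^ 2)
    (hτ₁ : 0 < τ₁) (ha₀ : cumWeight ν a₀ ≤ n - R) (hb₀ : n + W * τ₂ + R ≤ cumWeight ν b₀)
    (hu : ∀ t, 0 < t → ∀ x, 0 ≤ u t x)
    (hstart : ∀ p q, p ≤ q → cumWeight ν p - n - W * τ₁ < -s →
      s < cumWeight ν q - n - W * τ₁ → 1 - s ≤ mass ν u τ₁ p q) :
    IsSubbarrier (concentrationBarrier Λ W κ n s) ν a W u τ₀ τ₁ τ₂ τ₃ a₀ b₀ := by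
  have hΛ0 : 0 ≤ Λ :=
    (mul_pos (pow_pos (hc.weight_pos 0) 2) (hc.diffusivity_pos 0)).le.trans (hΛ 0).le
  have hmass : ∀ t, 0 < t → ∀ p q, p ≤ q → 0 ≤ mass ν u t p q := fun t ht p q hpq =>
    mass_nonneg (fun x => (hc.weight_pos x).le) (hu t ht) hpq
  constructor
  · intro p q _ hpq _
    by_cases hin : cumWeight ν p - n - W * τ₁ < -s ∧ s < cumWeight ν q - n - W * τ₁
    · exact (concentrationBarrier_le_one_sub hΛ0 hs.le hτ₁.le _ _).trans
        (hstart p q hpq hin.1 hin.2)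
    · refine (concentrationBarrier_nonpos hΛ0 hκ hs.le hτ₁.le ?_).trans (hmass τ₁ hτ₁ p q hpq)
      grind
  · intro t ht p _
    refine concentrationBarrier_nonpos hΛ0 hκ hs.le (hτ₁.le.trans ht.1) ?_
    grind
  · intro t ht q hq
    have ht0 : 0 < t := hτ₁.trans_le ht.1
    have := mul_nonneg hW ht0.le
    refine .inl ((concentrationBarrier_nonpos hΛ0 hκ hs.le ht0.le (.inr (.inr (hsR.trans
      (mul_le_mul_of_nonneg_left ?_ hs.le))))).trans (hmass t ht0 a₀ q hq.1))
    nlinarith [sq_nonneg (cumWeight ν q - n - W * t)]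
  · intro t ht p hp
    have ht0 : 0 < t := hτ₁.trans_le ht.1
    have := mul_le_mul_of_nonneg_left ht.2 hW
    refine .inl ((concentrationBarrier_nonpos hΛ0 hκ hs.le ht0.le (.inr (.inr (hsR.trans
      (mul_le_mul_of_nonneg_left ?_ hs.le))))).trans (hmass t ht0 p b₀ hp.2))
    nlinarith [sq_nonneg (cumWeight ν p - n - W * t)]
  · exact fun t _ p q _ _ _ _ => concentrationBarrier_dt_lt hΛ hs

namespace IsFundSolAt

theorem concentrationBarrier_le_mass (hu : IsFundSolAt ν a W y u) (hc : PosCoeff ν a)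
    (htop : Tendsto (cumWeight ν) atTop atTop) (hbot : Tendsto (cumWeight ν) atBot atBot)
    (hW : 0 ≤ W) (hΛ : ∀ x, ν x ^ 2 * a x < Λ) (hκ : 0 ≤ κ) (hs : 0 < s) (ht : 0 < t)
    (hpq : p ≤ q) : concentrationBarrier Λ W κ (cumWeight ν y) s t (cumWeight ν p)
      (cumWeight ν q) ≤ mass ν u t p q := by
  set R := 1 / s + 1
  have hsR : 1 ≤ s * R ^ 2 := by
    have : s * R ^ 2 = 1 / s + 2 + s := by simp only [R]; field_simp; ring
    have : 0 < 1 / s := by positivity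
    linarith
  obtain ⟨τ₁, hstart, hτ₁, hτ₁t⟩ :=
    ((hu.eventually_le_mass hc hW hs).and (Ioc_mem_nhdsGT ht)).exists
  obtain ⟨a₀, ha₀, hap⟩ :=
    ((hbot.eventually_le_atBot (cumWeight ν y - R)).and (eventually_lt_atBot p)).exists
  obtain ⟨b₀, hb₀, hqb⟩ :=
    ((htop.eventually_ge_atTop (cumWeight ν y + W * t + R)).and (eventually_gt_atTop q)).exists
  have hB := isSubbarrier_concentrationBarrier (τ₀ := τ₁ / 2) (τ₃ := t + 1) hc hW hΛ hκ hs
    (by positivity : 0 ≤ R) hsR hτ₁ ha₀ hb₀ hu.nonneg hstart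
  exact hB.le_mass hc hW (hu.isCanonicalSolOn.mono fun r hr => (half_pos hτ₁).trans hr.1)
    (half_lt_self hτ₁) (lt_add_one t) (by linarith)
    ((hu.continuousOn hc hW).mono
      (prod_mono (fun r hr => (half_pos hτ₁).trans_le hr.1) (subset_univ _)))
    ⟨hτ₁t, le_rfl⟩ hap.le hpq hqb.le

theorem half_le_mass (hu : IsFundSolAt ν a W y u) (hc : PosCoeff ν a)
    (htop : Tendsto (cumWeight ν) atTop atTop) (hbot : Tendsto (cumWeight ν) atBot atBot)
    (hW : 0 ≤ W) (hΛ : ∀ x, ν x ^ 2 * a x < Λ) (hd : 0 < d) (ht : 0 < t) (htd : t ≤ d ^ 2)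
    (hpq : p ≤ q) (hp : cumWeight ν p - cumWeight ν y - W * t ≤ -((Λ + 2) * d))
    (hq : (Λ + 2) * d ≤ cumWeight ν q - cumWeight ν y - W * t) : 1 / 2 ≤ mass ν u t p q := by
  have hΛ0 : 0 ≤ Λ :=
    (mul_pos (pow_pos (hc.weight_pos 0) 2) (hc.diffusivity_pos 0)).le.trans (hΛ 0).le
  have hκ : d⁻¹ ^ 2 * d ^ 2 = 1 := by field_simp
  have hlim : concentrationBarrier Λ W d⁻¹ (cumWeight ν y) 0 t (cumWeight ν p) (cumWeight ν q)
      ≤ mass ν u t p q := by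
    have hcont : Continuous fun s =>
        concentrationBarrier Λ W d⁻¹ (cumWeight ν y) s t (cumWeight ν p) (cumWeight ν q) := by
      simp only [concentrationBarrier, travellingExp]
      fun_prop
    refine le_of_tendsto ((hcont.tendsto 0).mono_left (nhdsWithin_le_nhds (s := Ioi 0))) ?_
    filter_upwards [self_mem_nhdsWithin] with s hs
    exact hu.concentrationBarrier_le_mass hc htop hbot hW hΛ (inv_nonneg.2 hd.le) hs ht hpq
  have hleft := travellingExp_le_exp_neg_two (W := W) (n := cumWeight ν y) (z := cumWeight ν p)
    hΛ0 hκ htd (by rw [inv_mul_le_iff₀ hd]; linarith)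
  have hright := travellingExp_le_exp_neg_two (W := W) (n := cumWeight ν y) (κ := -d⁻¹)
    (z := cumWeight ν q) hΛ0 (by rw [neg_sq, hκ]) htd
    (by rw [neg_mul, neg_le_neg_iff, le_inv_mul_iff₀ hd]; linarith)
  have hexp : Real.exp (-2) ≤ 1 / 4 := by
    rw [Real.exp_neg, one_div, show (2 : ℝ) = 1 + 1 by norm_num, Real.exp_add]
    exact inv_anti₀ (by norm_num) (by nlinarith [Real.add_one_le_exp (1 : ℝ)])
  simp only [concentrationBarrier, sub_zero, add_zero, zero_mul, mul_zero] at hlim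
  linarith

end IsFundSolAt

end Concentration

/-! ### Spreading of the concentrated mass -/

/-- A Gaussian bump in the `cumWeight` coordinates of the endpoints of an interval, centred at
time `T` at `(n - L, n + L)` and transported by the drift `W`. -/
noncomputable def gaussianBump (α σ W n L T t z₁ z₂ : ℝ) : ℝ :=
  Real.exp (-(α * ((z₁ - n + W * (T - t) + L) ^ 2 + (z₂ - n + W * (T - t) - L) ^ 2
    + σ * (T - t))))

section GaussianBump

variable {α σ W n L T t z₁ z₂ : ℝ}

theorem gaussianBump_pos : 0 < gaussianBump α σ W n L T t z₁ z₂ := Real.exp_pos _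

theorem hasDerivAt_gaussianBump_time :
    HasDerivAt (fun t => gaussianBump α σ W n L T t z₁ z₂) (gaussianBump α σ W n L T t z₁ z₂ *
      (α * (2 * W * ((z₁ - n + W * (T - t) + L) + (z₂ - n + W * (T - t) - L)) + σ))) t :=
  (hasDerivAt_of_eq_quadratic
    (-(α * ((z₁ - n + W * T + L) ^ 2 + (z₂ - n + W * T - L) ^ 2 + σ * T)))
    (α * (2 * W * ((z₁ - n + W * T + L) + (z₂ - n + W * T - L)) + σ)) (-(α * (2 * W ^ 2)))
    (fun t => by ring) (by ring)).exp

theorem hasDerivAt_gaussianBump_left :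
    HasDerivAt (fun z => gaussianBump α σ W n L T t z z₂) (gaussianBump α σ W n L T t z₁ z₂ *
      -(2 * α * (z₁ - n + W * (T - t) + L))) z₁ :=
  (hasDerivAt_of_eq_quadratic
    (-(α * ((-n + W * (T - t) + L) ^ 2 + (z₂ - n + W * (T - t) - L) ^ 2 + σ * (T - t))))
    (-(2 * α * (-n + W * (T - t) + L))) (-α) (fun z => by ring) (by ring)).exp

theorem hasDerivAt_gaussianBump_right :
    HasDerivAt (fun z => gaussianBump α σ W n L T t z₁ z) (gaussianBump α σ W n L T t z₁ z₂ *
      -(2 * α * (z₂ - n + W * (T - t) - L))) z₂ :=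
  (hasDerivAt_of_eq_quadratic
    (-(α * ((z₁ - n + W * (T - t) + L) ^ 2 + (-n + W * (T - t) - L) ^ 2 + σ * (T - t))))
    (-(2 * α * (-n + W * (T - t) - L))) (-α) (fun z => by ring) (by ring)).exp

end GaussianBump

/-- The barrier turning the mass of large intervals into a pointwise bound: half a Gaussian bump,
shifted down so that at time `T` it vanishes at the degenerate interval `(n, n)`. -/
noncomputable def gaussianBarrier (α σ W n L T : ℝ) : SmoothBarrier where
  toFun t z₁ z₂ := 1 / 2 * (gaussianBump α σ W n L T t z₁ z₂ - Real.exp (-(2 * α * L ^ 2)))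
  dt t z₁ z₂ := 1 / 2 * (gaussianBump α σ W n L T t z₁ z₂ *
    (α * (2 * W * ((z₁ - n + W * (T - t) + L) + (z₂ - n + W * (T - t) - L)) + σ)))
  d1 t z₁ z₂ := 1 / 2 * (gaussianBump α σ W n L T t z₁ z₂ *
    -(2 * α * (z₁ - n + W * (T - t) + L)))
  d2 t z₁ z₂ := 1 / 2 * (gaussianBump α σ W n L T t z₁ z₂ *
    -(2 * α * (z₂ - n + W * (T - t) - L)))
  d11 t z₁ z₂ := gaussianBump α σ W n L T t z₁ z₂ *
    (2 * α ^ 2 * (z₁ - n + W * (T - t) + L) ^ 2 - α)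
  d22 t z₁ z₂ := gaussianBump α σ W n L T t z₁ z₂ *
    (2 * α ^ 2 * (z₂ - n + W * (T - t) - L) ^ 2 - α)
  continuous := by
    unfold gaussianBump
    fun_prop
  hasDerivAt_dt t z₁ z₂ := (hasDerivAt_gaussianBump_time.sub_const _).const_mul _
  hasDerivAt_d1 t z₁ z₂ := (hasDerivAt_gaussianBump_left.sub_const _).const_mul _
  hasDerivAt_d2 t z₁ z₂ := (hasDerivAt_gaussianBump_right.sub_const _).const_mul _
  hasDerivAt_d11 t z₁ z₂ := ((hasDerivAt_gaussianBump_left.mul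
    (hasDerivAt_of_eq_quadratic (-(2 * α * (-n + W * (T - t) + L))) (-(2 * α)) 0
      (fun z => by ring) rfl)).const_mul _).congr_deriv (by ring)
  hasDerivAt_d22 t z₁ z₂ := ((hasDerivAt_gaussianBump_right.mul
    (hasDerivAt_of_eq_quadratic (-(2 * α * (-n + W * (T - t) - L))) (-(2 * α)) 0
      (fun z => by ring) rfl)).const_mul _).congr_deriv (by ring)

section GaussianBarrier

variable {ν a : ℝ → ℝ} {α σ W n L T t p q z₁ z₂ lam Λ τ₀ τ₃ a₀ b₀ : ℝ} {u : ℝ → ℝ → ℝ}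

theorem gaussianBarrier_nonpos (hα : 0 ≤ α) (h : 2 * L ^ 2 ≤ (z₁ - n + W * (T - t) + L) ^ 2 +
    (z₂ - n + W * (T - t) - L) ^ 2 + σ * (T - t)) : gaussianBarrier α σ W n L T t z₁ z₂ ≤ 0 := by
  have hle : gaussianBump α σ W n L T t z₁ z₂ ≤ Real.exp (-(2 * α * L ^ 2)) :=
    Real.exp_le_exp.2 (by linarith [mul_le_mul_of_nonneg_left h hα])
  simp only [gaussianBarrier]
  linarith

theorem gaussianBarrier_le_half (hα : 0 ≤ α) (hσ : 0 ≤ σ) (ht : t ≤ T) :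
    gaussianBarrier α σ W n L T t z₁ z₂ ≤ 1 / 2 := by
  have hle : gaussianBump α σ W n L T t z₁ z₂ ≤ 1 := by
    have := mul_nonneg hσ (sub_nonneg.2 ht)
    exact Real.exp_le_one_iff.2 (neg_nonpos.2 (by positivity))
  simp only [gaussianBarrier]
  linarith [Real.exp_pos (-(2 * α * L ^ 2))]

theorem gaussianBarrier_diag : gaussianBarrier α σ W n L T T n n = 0 := by
  simp only [gaussianBarrier, gaussianBump]
  ring_nf

theorem gaussianBarrier_d2_diag :
    (gaussianBarrier α σ W n L T).d2 T n n = α * L * Real.exp (-(2 * α * L ^ 2)) := by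
  simp only [gaussianBarrier, gaussianBump]
  ring_nf

theorem gaussianBarrier_dt_lt (hα : 0 < α) (hlam0 : 0 ≤ lam) (hlam : ∀ x, lam ≤ ν x ^ 2 * a x)
    (hΛ : ∀ x, ν x ^ 2 * a x < Λ) (hαT : σ / 2 + 2 * Λ ≤ 2 * α * lam * T)
    (h : T ≤ (cumWeight ν p - n + W * (T - t) + L) ^ 2
      + (cumWeight ν q - n + W * (T - t) - L) ^ 2) :
    (gaussianBarrier α σ W n L T).dt t (cumWeight ν p) (cumWeight ν q) <
      (gaussianBarrier α σ W n L T).spatialOp ν a W t p q := by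
  simp only [gaussianBarrier, SmoothBarrier.spatialOp]
  set U := cumWeight ν p - n + W * (T - t) + L
  set V := cumWeight ν q - n + W * (T - t) - L
  have key : σ / 2 < ν q ^ 2 * a q * (2 * α * V ^ 2 - 1) + ν p ^ 2 * a p * (2 * α * U ^ 2 - 1) := by
    have hU := mul_le_mul_of_nonneg_right (hlam p) (by positivity : 0 ≤ 2 * α * U ^ 2)
    have hV := mul_le_mul_of_nonneg_right (hlam q) (by positivity : 0 ≤ 2 * α * V ^ 2)
    have hT := mul_le_mul_of_nonneg_left h (by positivity : 0 ≤ 2 * α * lam)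
    linarith [hΛ p, hΛ q]
  linear_combination mul_lt_mul_of_pos_left key (mul_pos (gaussianBump_pos (α := α) (σ := σ)
    (W := W) (n := n) (L := L) (T := T) (t := t) (z₁ := cumWeight ν p) (z₂ := cumWeight ν q)) hα)

theorem isSubbarrier_gaussianBarrier (hc : PosCoeff ν a) (hW : 0 ≤ W) (hα : 0 < α) (hσ : 0 ≤ σ)
    (hL : 0 ≤ L) (hT : 0 < T) (hσT : σ * T = 4 * L ^ 2) (hlam0 : 0 ≤ lam)
    (hlam : ∀ x, lam ≤ ν x ^ 2 * a x) (hΛ : ∀ x, ν x ^ 2 * a x < Λ)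
    (hαT : σ / 2 + 2 * Λ ≤ 2 * α * lam * T) (ha₀ : cumWeight ν a₀ ≤ n - W * T - 3 * L)
    (hb₀ : n + 3 * L ≤ cumWeight ν b₀) (hu : ∀ t, 0 < t → ∀ x, 0 ≤ u t x)
    (hhalf : ∀ t, 0 < t → t ≤ T → ∀ p q, p ≤ q →
      (cumWeight ν p - n + W * (T - t) + L) ^ 2 + (cumWeight ν q - n + W * (T - t) - L) ^ 2 ≤ T →
      1 / 2 ≤ mass ν u t p q) :
    IsSubbarrier (gaussianBarrier α σ W n L T) ν a W u τ₀ (T / 2) T τ₃ a₀ b₀ := by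
  have hmass : ∀ t, 0 < t → ∀ p q, p ≤ q → 0 ≤ mass ν u t p q := fun t ht p q hpq =>
    mass_nonneg (fun x => (hc.weight_pos x).le) (hu t ht) hpq
  have hpos : ∀ t ∈ Icc (T / 2) T, 0 < t ∧ 0 ≤ σ * (T - t) ∧ 0 ≤ W * (T - t) := fun t ht =>
    ⟨(half_pos hT).trans_le ht.1, mul_nonneg hσ (sub_nonneg.2 ht.2),
      mul_nonneg hW (sub_nonneg.2 ht.2)⟩
  constructor
  · intro p q _ hpq _
    refine (gaussianBarrier_nonpos hα.le ?_).trans (hmass _ (half_pos hT) p q hpq)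
    linarith [sq_nonneg (cumWeight ν p - n + W * (T - T / 2) + L),
      sq_nonneg (cumWeight ν q - n + W * (T - T / 2) - L)]
  · intro t ht p _
    refine gaussianBarrier_nonpos hα.le ?_
    linarith [(hpos t ht).2.1, sq_nonneg (cumWeight ν p - n + W * (T - t))]
  · intro t ht q hq
    obtain ⟨ht0, hσt, -⟩ := hpos t ht
    refine .inl ((gaussianBarrier_nonpos hα.le ?_).trans (hmass t ht0 a₀ q hq.1))
    have hfar : 2 * L ≤ -(cumWeight ν a₀ - n + W * (T - t) + L) := by
      linarith [mul_nonneg hW ht0.le]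
    nlinarith [sq_nonneg (cumWeight ν q - n + W * (T - t) - L)]
  · intro t ht p hp
    obtain ⟨ht0, hσt, hWt⟩ := hpos t ht
    refine .inl ((gaussianBarrier_nonpos hα.le ?_).trans (hmass t ht0 p b₀ hp.2))
    have : 2 * L ≤ cumWeight ν b₀ - n + W * (T - t) - L := by linarith
    nlinarith [sq_nonneg (cumWeight ν p - n + W * (T - t) + L)]
  · intro t ht p q _ hpq _ hlt
    refine gaussianBarrier_dt_lt hα hlam0 hlam hΛ hαT (le_of_not_ge fun hin => hlt.not_ge ?_)
    exact (gaussianBarrier_le_half hα.le hσ ht.2).trans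
      (hhalf t (hpos t ht).1 ht.2 p q hpq.le hin)

end GaussianBarrier

/-- The constant in the near-diagonal lower bound for a weight and a diffusivity with
`lam ≤ ν²a < Λ`, at distance at most `r√t` in the `cumWeight` coordinate. -/
noncomputable def nearDiagonalConst (lam Λ r : ℝ) : ℝ :=
  (((Λ + 3 + r) ^ 2 + Λ) / lam) * (Λ + 3 + r) *
    Real.exp (-(2 * (((Λ + 3 + r) ^ 2 + Λ) / lam) * (Λ + 3 + r) ^ 2))

theorem nearDiagonalConst_pos {lam Λ r : ℝ} (hlam : 0 < lam) (hΛ : 0 ≤ Λ) (hr : 0 ≤ r) :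
    0 < nearDiagonalConst lam Λ r := by
  unfold nearDiagonalConst
  positivity

theorem nearDiagonalConst_div_sqrt {lam Λ r σ W n t : ℝ} (ht : 0 < t) :
    nearDiagonalConst lam Λ r / √t =
      (gaussianBarrier (((Λ + 3 + r) ^ 2 + Λ) / lam / t) σ W n ((Λ + 3 + r) * √t) t).d2 t n n := by
  rw [gaussianBarrier_d2_diag, nearDiagonalConst, mul_pow, Real.sq_sqrt ht.le]
  generalize Λ + 3 + r = L
  generalize (L ^ 2 + Λ) / lam = α
  have hcoeff : α / t * (L * √t) = α * L / √t := by
    rw [div_mul_eq_mul_div, ← mul_assoc, mul_div_assoc, Real.sqrt_div_self', mul_one_div]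
  have hexp : 2 * (α / t) * (L ^ 2 * t) = 2 * α * L ^ 2 := by field_simp
  rw [hcoeff, hexp, mul_div_right_comm]

namespace IsFundSolAt

variable {ν a : ℝ → ℝ} {W y lam Λ r t x : ℝ} {u : ℝ → ℝ → ℝ}

theorem half_le_mass_of_sq_add_sq_le {n L s p q : ℝ} (hu : IsFundSolAt ν a W y u)
    (hc : PosCoeff ν a) (htop : Tendsto (cumWeight ν) atTop atTop)
    (hbot : Tendsto (cumWeight ν) atBot atBot) (hW : 0 ≤ W) (hΛ : ∀ x, ν x ^ 2 * a x < Λ)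
    (hn : |n - cumWeight ν y - W * t| ≤ r * √t) (hL : L = (Λ + 3 + r) * √t)
    (hs : 0 < s) (hst : s ≤ t) (hpq : p ≤ q)
    (h : (cumWeight ν p - n + W * (t - s) + L) ^ 2 + (cumWeight ν q - n + W * (t - s) - L) ^ 2
      ≤ t) : 1 / 2 ≤ mass ν u s p q := by
  have ht : 0 < t := hs.trans_le hst
  have hn := abs_le.1 hn
  refine hu.half_le_mass hc htop hbot hW hΛ (Real.sqrt_pos.2 ht) hs (by rwa [Real.sq_sqrt ht.le])
    hpq ?_ ?_
  · have := (le_abs_self _).trans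
      (Real.abs_le_sqrt ((le_add_of_nonneg_right (sq_nonneg _)).trans h))
    linarith
  · have := (neg_abs_le _).trans' (neg_le_neg
      (Real.abs_le_sqrt ((le_add_of_nonneg_left (sq_nonneg _)).trans h)))
    linarith

theorem nearDiagonalConst_div_sqrt_le (hu : IsFundSolAt ν a W y u) (hc : PosCoeff ν a)
    (htop : Tendsto (cumWeight ν) atTop atTop) (hbot : Tendsto (cumWeight ν) atBot atBot)
    (hW : 0 ≤ W) (hlam0 : 0 < lam) (hlam : ∀ x, lam ≤ ν x ^ 2 * a x)
    (hΛ : ∀ x, ν x ^ 2 * a x < Λ) (hr : 0 ≤ r) (ht : 0 < t)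
    (h : |cumWeight ν x - cumWeight ν y - W * t| ≤ r * √t) :
    nearDiagonalConst lam Λ r / √t ≤ u t x := by
  have hΛ0 : 0 < Λ := (hlam0.trans_le (hlam 0)).trans (hΛ 0)
  have : 0 < √t := Real.sqrt_pos.2 ht
  have ht4 : 0 < t / 4 := by positivity
  set n := cumWeight ν x
  set L := (Λ + 3 + r) * √t with hL
  have hL2 : L ^ 2 = (Λ + 3 + r) ^ 2 * t := by rw [hL, mul_pow, Real.sq_sqrt ht.le]
  obtain ⟨a₀, ha₀, hax⟩ := ((hbot.eventually_le_atBot (n - W * t - 3 * L)).and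
    (eventually_lt_atBot x)).exists
  obtain ⟨b₀, hb₀, hxb⟩ := ((htop.eventually_ge_atTop (n + 3 * L)).and
    (eventually_gt_atTop x)).exists
  have hB := isSubbarrier_gaussianBarrier (α := ((Λ + 3 + r) ^ 2 + Λ) / lam / t)
    (σ := 4 * (Λ + 3 + r) ^ 2) (τ₀ := t / 4) (τ₃ := t + 1) hc hW (by positivity) (by positivity)
    (by positivity) ht (by rw [hL2]; ring) hlam0.le hlam hΛ (le_of_eq (by field_simp; ring)) ha₀ hb₀
    hu.nonneg fun s hs hst p q hpq => hu.half_le_mass_of_sq_add_sq_le hc htop hbot hW hΛ h hL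
      hs hst hpq
  rw [nearDiagonalConst_div_sqrt (σ := 4 * (Λ + 3 + r) ^ 2) (W := W) (n := n) ht]
  refine le_of_le_mass hc.continuous_weight (hc.weight_pos x)
    (hu.isCanonicalSolOn.continuous_apply ht) hxb (SmoothBarrier.hasDerivAt_d2 _ t n n)
    gaussianBarrier_diag fun q hq => ?_
  exact hB.le_mass hc hW (hu.isCanonicalSolOn.mono fun s hs => ht4.trans hs.1) (by linarith)
    (lt_add_one t) (hax.trans hxb)
    ((hu.continuousOn hc hW).mono (prod_mono (fun s hs => ht4.trans_le hs.1) (subset_univ _)))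
    ⟨by linarith, le_rfl⟩ hax.le hq.1.le hq.2.le

end IsFundSolAt

/-! ### Corrector coordinates and cumulative weight -/

theorem Elliptic.pos {μ : ℝ} {f : ℝ → ℝ} (hf : Elliptic μ f) (hμ : 0 < μ) (x : ℝ) : 0 < f x :=
  (one_div_pos.2 hμ).trans_le (hf x).1

namespace IsCorrector

variable {μ r W t : ℝ} {ν a T : ℝ → ℝ}

/-- Integrating the corrector equation: `aνT' - W(T - N)` is constant, where `N` is the cumulative
weight. -/
theorem exists_flux (hT : IsCorrector μ ν a W T) (hμ : 0 < μ) (hν : Continuous ν)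
    (hνμ : Elliptic μ ν) (haμ : Elliptic μ a) :
    ∃ F : ℝ → ℝ, (∀ x, 0 < F x ∧ F x ≤ μ ^ 7) ∧
      ∀ x y, W * ((T x - T y) - (cumWeight ν x - cumWeight ν y)) = F x - F y := by
  obtain ⟨-, T', hT', hflux, hbound⟩ := hT
  have hT0 : ∀ x, 0 < T' x := fun x => (by positivity : 0 < 1 / μ ^ 5).trans_le (hbound x).1
  have haν : ∀ x, 0 < a x * ν x := fun x => mul_pos (haμ.pos hμ x) (hνμ.pos hμ x)
  refine ⟨fun x => a x * ν x * T' x, fun x => ⟨mul_pos (haν x) (hT0 x), ?_⟩, fun x y => ?_⟩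
  · calc a x * ν x * T' x ≤ μ * μ * μ ^ 5 := by
          gcongr
          · exact (hT0 x).le
          · exact (hνμ.pos hμ x).le
          exacts [(haμ x).2, (hνμ x).2, (hbound x).2]
      _ = μ ^ 7 := by ring
  · have hderiv : ∀ z,
        HasDerivAt (fun z => a z * ν z * T' z - W * (T z - cumWeight ν z)) 0 z := fun z =>
      ((hflux z).sub (((hT' z).sub (hasDerivAt_cumWeight hν z)).const_mul W)).congr_deriv (by ring)
    have hconst := is_const_of_deriv_eq_zero (fun z => (hderiv z).differentiableAt)
      (fun z => (hderiv z).deriv) x y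
    linarith

theorem abs_mul_sub_cumWeight_sub_le (hT : IsCorrector μ ν a W T) (hμ : 0 < μ) (hν : Continuous ν)
    (hνμ : Elliptic μ ν) (haμ : Elliptic μ a) (x y : ℝ) :
    |W * ((T x - T y) - (cumWeight ν x - cumWeight ν y))| ≤ μ ^ 7 := by
  obtain ⟨F, hF, hTF⟩ := hT.exists_flux hμ hν hνμ haμ
  rw [hTF, abs_le]
  constructor <;> linarith [(hF x).1, (hF x).2, (hF y).1, (hF y).2]

theorem abs_cumWeight_sub_le (hT : IsCorrector μ ν a W T) (hμ : 0 < μ) (hν : Continuous ν)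
    (hνμ : Elliptic μ ν) (x y : ℝ) : |cumWeight ν x - cumWeight ν y| ≤ μ ^ 6 * |T x - T y| := by
  obtain ⟨-, T', hT', -, hbound⟩ := hT
  wlog hyx : y ≤ x generalizing x y
  · rw [abs_sub_comm, abs_sub_comm (T x)]
    exact this y x (le_of_not_ge hyx)
  have hderiv : ∀ z, HasDerivAt (fun z => μ ^ 6 * T z - cumWeight ν z) (μ ^ 6 * T' z - ν z) z :=
    fun z => ((hT' z).const_mul _).sub (hasDerivAt_cumWeight hν z)
  have hmono : Monotone fun z => μ ^ 6 * T z - cumWeight ν z := by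
    refine monotone_of_deriv_nonneg (fun z => (hderiv z).differentiableAt) fun z => ?_
    rw [(hderiv z).deriv, sub_nonneg]
    calc ν z ≤ μ := (hνμ z).2
      _ = μ ^ 6 * (1 / μ ^ 5) := by field_simp
      _ ≤ μ ^ 6 * T' z := by gcongr; exact (hbound z).1
  have hle : cumWeight ν x - cumWeight ν y ≤ μ ^ 6 * (T x - T y) := by linarith [hmono hyx]
  have hN := (strictMono_cumWeight hν (hνμ.pos hμ)).monotone hyx
  rw [abs_of_nonneg (sub_nonneg.2 hN)]
  exact hle.trans (by gcongr; exact le_abs_self _)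

/-- For a large drift the two coordinates differ by a bounded flux; for a small drift neither
coordinate moves by more than a multiple of `√t`. -/
theorem abs_cumWeight_sub_sub_le (hT : IsCorrector μ ν a W T) (hμ : 0 < μ) (hν : Continuous ν)
    (hνμ : Elliptic μ ν) (haμ : Elliptic μ a) (hr : 0 ≤ r) (hW : 0 ≤ W) (ht : 0 ≤ t) {x y : ℝ}
    (h : |T x - T y - W * t| ≤ r * √t) :
    |cumWeight ν x - cumWeight ν y - W * t| ≤ (r + μ ^ 7 + μ ^ 6 * (r + 1) + 1) * √t := by
  have hd := Real.sqrt_nonneg t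
  have hμ7 : 0 ≤ μ ^ 7 * √t := by positivity
  have hμ6 : 0 ≤ μ ^ 6 * (r + 1) * √t := by positivity
  have hrd : 0 ≤ r * √t := by positivity
  rcases le_total 1 (W * √t) with hlarge | hsmall
  · have hTN : |(T x - T y) - (cumWeight ν x - cumWeight ν y)| ≤ μ ^ 7 * √t :=
      calc |(T x - T y) - (cumWeight ν x - cumWeight ν y)|
          ≤ |(T x - T y) - (cumWeight ν x - cumWeight ν y)| * (W * √t) :=
            le_mul_of_one_le_right (abs_nonneg _) hlarge
        _ = |W * ((T x - T y) - (cumWeight ν x - cumWeight ν y))| * √t := by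
            rw [abs_mul, abs_of_nonneg hW]; ring
        _ ≤ μ ^ 7 * √t := by
            gcongr; exact hT.abs_mul_sub_cumWeight_sub_le hμ hν hνμ haμ x y
    rw [abs_le] at h hTN ⊢
    constructor <;> linarith
  · have hWt : W * t ≤ √t := by
      calc W * t = W * √t * √t := by rw [mul_assoc, Real.mul_self_sqrt ht]
        _ ≤ √t := mul_le_of_le_one_left hd hsmall
    have hT' : |T x - T y| ≤ (r + 1) * √t := by
      have := abs_add_le (T x - T y - W * t) (W * t)
      rw [sub_add_cancel, abs_of_nonneg (by positivity : 0 ≤ W * t)] at this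
      linarith
    have hN : |cumWeight ν x - cumWeight ν y| ≤ μ ^ 6 * (r + 1) * √t := by
      rw [mul_assoc]
      exact (hT.abs_cumWeight_sub_le hμ hν hνμ x y).trans (by gcongr)
    have := abs_sub (cumWeight ν x - cumWeight ν y) (W * t)
    rw [abs_of_nonneg (by positivity : 0 ≤ W * t)] at this
    linarith

end IsCorrector

/-! ### The near-diagonal lower bound -/

theorem IsFundSol.isFundSolAt {ν a : ℝ → ℝ} {W : ℝ} {P : ℝ → ℝ → ℝ → ℝ} (hP : IsFundSol ν a W P)
    (y : ℝ) : IsFundSolAt ν a W y fun t x => P t x y :=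
  ⟨hP.1 y, hP.2.1 y, hP.2.2.1 y, hP.2.2.2.1 y⟩

theorem near_diagonal_lower_bound_general {μ r : ℝ} (hμ : 0 < μ) (hr : 0 ≤ r) :
    ∃ C : ℝ, 0 < C ∧ ∀ ν a : ℝ → ℝ, Continuous ν → Continuous a → Elliptic μ ν → Elliptic μ a →
      ∀ W : ℝ, 0 ≤ W → ∀ T : ℝ → ℝ, IsCorrector μ ν a W T →
      ∀ (y : ℝ) (u : ℝ → ℝ → ℝ), IsFundSolAt ν a W y u → ∀ t : ℝ, 0 < t → ∀ x : ℝ,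
        |T x - T y - W * t| ≤ r * √t → 1 / (C * √t) ≤ u t x := by
  set R := r + μ ^ 7 + μ ^ 6 * (r + 1) + 1
  have hR : 0 ≤ R := by positivity
  refine ⟨1 / nearDiagonalConst ((1 / μ) ^ 3) (μ ^ 3 + 1) R,
    one_div_pos.2 (nearDiagonalConst_pos (by positivity) (by positivity) hR),
    fun ν a hν ha hνμ haμ W hW T hT y u hu t ht x h => ?_⟩
  have hνm := one_div_pos.2 hμ
  have hlower : ∀ x, (1 / μ) ^ 3 ≤ ν x ^ 2 * a x := fun x => by
    rw [pow_succ]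
    gcongr
    exacts [(hνμ x).1, (haμ x).1]
  have hupper : ∀ x, ν x ^ 2 * a x < μ ^ 3 + 1 := fun x => by
    refine lt_add_of_le_of_pos ?_ one_pos
    rw [pow_succ μ]
    have := (hνμ.pos hμ x).le
    have := (haμ.pos hμ x).le
    gcongr
    exacts [(hνμ x).2, (haμ x).2]
  rw [one_div_mul_eq_div, one_div_div]
  exact hu.nearDiagonalConst_div_sqrt_le ⟨hν, ha, hνμ.pos hμ, haμ.pos hμ⟩
    (tendsto_cumWeight_atTop hν hνm fun x => (hνμ x).1)
    (tendsto_cumWeight_atBot hν hνm fun x => (hνμ x).1) hW (by positivity) hlower hupper hR ht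
    (hT.abs_cumWeight_sub_sub_le hμ hν hνμ haμ hr hW ht.le h)

/-- Proposition 4.3 (near-diagonal lower bound): for every `μ ≥ 1` and every `r > 0`
there is `C > 0` such that any fundamental solution of the canonical equation satisfies
`P(t,x,y) ≥ 1/(C√t)` whenever `|T(x) − T(y) − Wt| ≤ r√t`. -/
theorem near_diagonal_lower_bound (μ : ℝ) (hμ : 1 ≤ μ) (r : ℝ) (hr : 0 < r) :
    ∃ C : ℝ, 0 < C ∧ ∀ ν a : ℝ → ℝ, Continuous ν → Continuous a →
      Elliptic μ ν → Elliptic μ a →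
      ∀ W : ℝ, 0 ≤ W →
      ∀ T : ℝ → ℝ, IsCorrector μ ν a W T →
      ∀ P : ℝ → ℝ → ℝ → ℝ, IsFundSol ν a W P →
      ∀ t : ℝ, 0 < t → ∀ x y : ℝ,
        |T x - T y - W * t| ≤ r * Real.sqrt t →
        1 / (C * Real.sqrt t) ≤ P t x y := by
  obtain ⟨C, hC, h⟩ := near_diagonal_lower_bound_general (zero_lt_one.trans_le hμ) hr.le
  exact ⟨C, hC, fun ν a hν ha hνμ haμ W hW T hT P hP t ht x y =>
    h ν a hν ha hνμ haμ W hW T hT y _ (hP.isFundSolAt y) t ht x⟩
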